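/- arXiv:2111.04166 — 2 statements merged into one kernel-verified Lean document; each statement's English description precedes it below -/
import Mathlib

section
/- Let q be a power of two and let n > 1 be an integer. Then |𝓘(x^3 + x^2, 1, n, q)| = (1/(3 n_3)) (I(n/n_3, q^{n_3}) − I(n/n_3, ε)), where ε = 1 if q ≡ 1 (mod 3) and ε = −1 if q ≡ −1 (mod 3). -/
open Polynomial

/-- The transform `f_R` of a nonzero polynomial `f` by the rational expression `R = g/h`. -/
noncomputable def ratTransform {K : Type*} [Field K] (g h f : K[X]) : K[X] :=
  ∑ i ∈ Finset.range (f.natDegree + 1), C (f.coeff i) * g ^ i * h ^ (f.natDegree - i)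

/-- `𝓘(g,h,n,q)`: the set of monic irreducible polynomials `f` of degree `n` over the field
such that `f_R` is irreducible. -/
noncomputable def IrredSet {K : Type*} [Field K] (g h : K[X]) (n : ℕ) : Set K[X] :=
  {f | f.Monic ∧ Irreducible f ∧ f.natDegree = n ∧ Irreducible (ratTransform g h f)}

/-- `I(n,q) = (1/n) ∑_{d ∣ n} μ(d) q^{n/d}`, used formally for any rational `q`. -/
noncomputable def Ifun (n : ℕ) (q : ℚ) : ℚ :=
  (1 / (n : ℚ)) * ∑ d ∈ n.divisors, ((ArithmeticFunction.moebius d : ℤ) : ℚ) * q ^ (n / d)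

/-- `I(n/m, q)` with the convention that it is `0` when `m` does not divide `n`
(i.e. when `n/m` is not a positive integer). -/
noncomputable def IfunD (n m : ℕ) (q : ℚ) : ℚ := if m ∣ n then Ifun (n / m) q else 0

/-- `n₃`: the largest power of `3` dividing `n`. -/
def nThree (n : ℕ) : ℕ := 3 ^ (n.factorization 3)

/-!
Write `g = X ^ 3 + X ^ 2`. For `a` in a finite extension `L` of `F`, if `a` is not a value of `g`
on `L` then the cubic `g - a` is irreducible over `F(a)`, so `f.comp g` is irreducible for
`f = minpoly F a`. Conversely, if `f.comp g` is irreducible of degree `3 * d`, where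
`d = f.natDegree`, then `g - a` has no root in `L` unless `3 * d` divides `[L : F]`. Sorting the
non-values of `g` in the extension of degree `n` by minimal polynomial therefore gives
`∑ d * |𝓘_d|` over the `d ∣ n` with `3 * d ∤ n`. For `n = 3 ^ k * m` with `3 ∤ m` these `d` are the
`3 ^ k * e` with `e ∣ m`, so the sum can be Möbius inverted once the non-values are counted.

For that count, pair up the roots of each `g - a`. If `g - a` has a root in `L`, its number of
ordered pairs of roots in `L`, with multiplicity, is three times its number of distinct roots
minus three, while without roots there is no pair. Summing over `a ∈ L`, three times the number of
non-values is the number of points of the conic `x ^ 2 + x * y + y ^ 2 + x + y = 0`, which is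
`|L| - (|L| / 3)` by projection from the point `(0, -1)`.
-/

section Parametrization

variable {K : Type*} [Field K]

/-- The second point of intersection of the conic `x ^ 2 + x * y + y ^ 2 + x + y = 0` with the line
of slope `t` through `(0, -1)`, which rationally parametrizes the conic. It is the junk value
`(0, 0)` at the roots of `t ^ 2 + t + 1`, the directions of the points at infinity. -/
def secantConicPoint (t : K) : K × K :=
  (t / (t ^ 2 + t + 1), -(t + 1) / (t ^ 2 + t + 1))

theorem secantConicPoint_ne_zero {t : K} (ht : t ^ 2 + t + 1 ≠ 0) :
    secantConicPoint t ≠ (0, 0) := by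
  simp only [secantConicPoint, ne_eq, Prod.mk.injEq, div_eq_zero_iff, ht, or_false]
  grind

theorem slope_secantConicPoint {t : K} (ht : t ^ 2 + t + 1 ≠ 0) :
    ((secantConicPoint t).2 + 1) / (secantConicPoint t).1 = t := by
  simp only [secantConicPoint]
  grind

end Parametrization

section Counting

open scoped Finset

variable {K : Type*} [Field K] [Fintype K]

theorem legendreSym_three_natCast (q : ℕ) : legendreSym 3 q =
    if q % 3 = 0 then 0 else if q % 3 = 1 then 1 else -1 := by
  rw [legendreSym.mod]
  have : q % 3 < 3 := Nat.mod_lt _ (by norm_num)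
  norm_cast
  interval_cases q % 3 <;> decide +revert

theorem card_primitiveRoots_of_dvd {n : ℕ} (h : n ∣ Fintype.card K - 1) :
    (primitiveRoots n K).card = n.totient := by
  classical
  rw [← Fintype.card_units] at h
  obtain ⟨u, hu⟩ := IsCyclic.exists_ofOrder_eq_natCard (α := Kˣ)
  rw [Nat.card_eq_fintype_card] at hu
  obtain ⟨m, hm⟩ := h
  have hum : IsPrimitiveRoot (u ^ m) n :=
    (IsPrimitiveRoot.iff_orderOf.mpr hu).pow Fintype.card_pos (hm.trans (mul_comm n m))
  exact (IsPrimitiveRoot.coe_units_iff.mpr hum).card_primitiveRoots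

theorem primitiveRoots_eq_empty_of_not_dvd {n : ℕ} (h : ¬ n ∣ Fintype.card K - 1) :
    primitiveRoots n K = ∅ := by
  obtain rfl | hn := eq_or_ne n 0
  · exact primitiveRoots_zero
  refine Finset.eq_empty_of_forall_notMem fun ζ hζ ↦ h ?_
  have hζ := isPrimitiveRoot_of_mem_primitiveRoots hζ
  exact (hζ.pow_eq_one_iff_dvd _).mp (FiniteField.pow_card_sub_one_eq_one ζ (hζ.ne_zero hn))

theorem natCast_eq_zero_iff_dvd_card {p : ℕ} [Fact p.Prime] :
    (p : K) = 0 ↔ p ∣ Fintype.card K := by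
  rw [← not_iff_not, ← ne_eq, ← isUnit_iff_ne_zero, isUnit_iff_not_dvd_char,
    prime_dvd_char_iff_dvd_card]

variable [DecidableEq K]

theorem filter_sq_add_self_add_one_eq_primitiveRoots (h : (3 : K) ≠ 0) :
    ({t | t ^ 2 + t + 1 = 0} : Finset K) = primitiveRoots 3 K := by
  have : NeZero ((3 : ℕ) : K) := ⟨mod_cast h⟩
  ext t
  rw [mem_primitiveRoots three_pos, ← isRoot_cyclotomic_iff, cyclotomic_three]
  simp

theorem card_roots_sq_add_self_add_one :
    (#{t : K | t ^ 2 + t + 1 = 0} : ℤ) = 1 + legendreSym 3 (Fintype.card K) := by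
  rw [legendreSym_three_natCast]
  split_ifs with h0 h1
  · have h3 : (3 : K) = 0 :=
      mod_cast natCast_eq_zero_iff_dvd_card.mpr (Nat.dvd_of_mod_eq_zero h0)
    have (t : K) : t ^ 2 + t + 1 = 0 ↔ t = 1 := by
      have : t ^ 2 + t + 1 = (t - 1) ^ 2 := by linear_combination t * h3
      rw [this, sq_eq_zero_iff, sub_eq_zero]
    simp [this, Finset.filter_eq']
  all_goals
    have h3 : (3 : K) ≠ 0 := fun h ↦
      h0 (Nat.mod_eq_zero_of_dvd (natCast_eq_zero_iff_dvd_card.mp (mod_cast h)))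
    rw [filter_sq_add_self_add_one_eq_primitiveRoots h3]
  · rw [card_primitiveRoots_of_dvd (by omega), Nat.totient_prime Nat.prime_three]
    norm_num
  · have := Fintype.card_pos (α := K)
    rw [primitiveRoots_eq_empty_of_not_dvd (by omega)]
    simp

/-- The affine conic whose equation is the divided difference `(g x - g y) / (x - y)` of
`g = x ^ 3 + x ^ 2`: its points are the ordered pairs of roots, with multiplicity, of the
polynomials `g - a`. -/
def secantConic (K : Type*) [Field K] [Fintype K] [DecidableEq K] : Finset (K × K) :=
  {p | p.1 ^ 2 + p.1 * p.2 + p.2 ^ 2 + p.1 + p.2 = 0}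

theorem mem_secantConic {x y : K} :
    (x, y) ∈ secantConic K ↔ x ^ 2 + x * y + y ^ 2 + x + y = 0 := by
  simp [secantConic]

theorem secantConicPoint_mem (t : K) : secantConicPoint t ∈ secantConic K := by
  rw [secantConicPoint, mem_secantConic]
  grind

-- At `(0, -1)` the slope is `0 / 0 = 0`, which happens to be the slope of the tangent there.
theorem secantConicPoint_slope {x y : K} (h : (x, y) ∈ secantConic K) (h0 : (x, y) ≠ (0, 0)) :
    ((y + 1) / x) ^ 2 + (y + 1) / x + 1 ≠ 0 ∧ secantConicPoint ((y + 1) / x) = (x, y) := by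
  rw [mem_secantConic] at h
  obtain rfl | hx := eq_or_ne x 0
  · have hy : y * (y + 1) = 0 := by linear_combination h
    obtain rfl : y = -1 := by grind
    simp [secantConicPoint]
  · obtain ⟨t, ht⟩ : ∃ t, y + 1 = t * x := ⟨(y + 1) / x, by field_simp⟩
    obtain rfl : y = t * x - 1 := by grind
    have hxt : (t ^ 2 + t + 1) * x = t := by
      apply mul_left_cancel₀ hx
      linear_combination h
    have hd : t ^ 2 + t + 1 ≠ 0 := by grind
    rw [ht, mul_div_cancel_right₀ _ hx]
    refine ⟨hd, Prod.ext ?_ ?_⟩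
    · exact (div_eq_iff hd).mpr (by linear_combination -hxt)
    · exact (div_eq_iff hd).mpr (by linear_combination -t * hxt)

theorem card_secantConic_add_card_roots :
    #(secantConic K) + #{t : K | t ^ 2 + t + 1 = 0} = Fintype.card K + 1 := by
  have hbij : #((secantConic K).erase (0, 0)) = #{t : K | ¬ t ^ 2 + t + 1 = 0} := by
    refine Finset.card_nbij' (fun p ↦ (p.2 + 1) / p.1) secantConicPoint ?_ ?_ ?_ ?_
    · intro p hp
      simpa using (secantConicPoint_slope (Finset.mem_of_mem_erase hp)
        (Finset.ne_of_mem_erase hp)).1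
    · intro t ht
      have ht : t ^ 2 + t + 1 ≠ 0 := by simpa using ht
      exact Finset.mem_erase.mpr ⟨secantConicPoint_ne_zero ht, secantConicPoint_mem t⟩
    · intro p hp
      exact (secantConicPoint_slope (Finset.mem_of_mem_erase hp) (Finset.ne_of_mem_erase hp)).2
    · intro t ht
      exact slope_secantConicPoint (by simpa using ht)
  have herase := Finset.card_erase_add_one
    (show ((0, 0) : K × K) ∈ secantConic K by simp [mem_secantConic])
  have hsplit := Finset.card_filter_add_card_filter_not (s := (Finset.univ : Finset K))
    (fun t ↦ t ^ 2 + t + 1 = 0)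
  rw [Finset.card_univ] at hsplit
  omega

theorem cube_add_sq_eq_iff {x u : K} :
    u ^ 3 + u ^ 2 = x ^ 3 + x ^ 2 ↔ u = x ∨ (x, u) ∈ secantConic K := by
  have hfactor : u ^ 3 + u ^ 2 - (x ^ 3 + x ^ 2) =
      (u - x) * (x ^ 2 + x * u + u ^ 2 + x + u) := by
    ring
  rw [mem_secantConic, ← sub_eq_zero, hfactor, mul_eq_zero, sub_eq_zero]

theorem mem_secantConic_iff_of_mem {x y u : K} (h : (x, y) ∈ secantConic K) :
    (x, u) ∈ secantConic K ↔ u = y ∨ u = -1 - x - y := by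
  rw [mem_secantConic] at h ⊢
  have hfactor : x ^ 2 + x * u + u ^ 2 + x + u = (u - y) * (u - (-1 - x - y)) := by
    linear_combination h
  rw [hfactor, mul_eq_zero, sub_eq_zero, sub_eq_zero]

theorem cube_add_sq_eq_iff_of_mem_secantConic {x y u : K} (h : (x, y) ∈ secantConic K) :
    u ^ 3 + u ^ 2 = x ^ 3 + x ^ 2 ↔ u = x ∨ u = y ∨ u = -1 - x - y := by
  rw [cube_add_sq_eq_iff, mem_secantConic_iff_of_mem h]

theorem secantConic_fiber_eq_of_mem {x y : K} (h : (x, y) ∈ secantConic K) :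
    {p ∈ secantConic K | p.1 ^ 3 + p.1 ^ 2 = x ^ 3 + x ^ 2} =
      {(x, y), (x, -1 - x - y), (y, x), (y, -1 - x - y), (-1 - x - y, x), (-1 - x - y, y)} := by
  have hyx : (y, x) ∈ secantConic K := by
    rw [mem_secantConic] at h ⊢
    linear_combination h
  have hzx : (-1 - x - y, x) ∈ secantConic K := by
    rw [mem_secantConic] at h ⊢
    linear_combination h
  ext ⟨u, v⟩
  simp only [Finset.mem_filter, cube_add_sq_eq_iff_of_mem_secantConic h, Finset.mem_insert,
    Finset.mem_singleton, Prod.mk.injEq]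
  constructor
  · rintro ⟨huv, rfl | rfl | rfl⟩
    · have := (mem_secantConic_iff_of_mem h).mp huv
      grind
    · have := (mem_secantConic_iff_of_mem hyx).mp huv
      grind
    · have := (mem_secantConic_iff_of_mem hzx).mp huv
      grind
  · grind [mem_secantConic]

theorem card_ordered_pairs_add_three {α : Type*} [DecidableEq α] {x y z : α}
    (h : ¬ (x = y ∧ y = z)) :
    #{(x, y), (x, z), (y, x), (y, z), (z, x), (z, y)} + 3 = 3 * #{x, y, z} := by
  by_cases hxy : x = y <;> by_cases hyz : y = z <;> by_cases hxz : x = z <;> grind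

theorem card_secantConic_fiber_add_three (x : K) :
    #{p ∈ secantConic K | p.1 ^ 3 + p.1 ^ 2 = x ^ 3 + x ^ 2} + 3 =
      3 * #{u : K | u ^ 3 + u ^ 2 = x ^ 3 + x ^ 2} := by
  by_cases hx : ∃ y, (x, y) ∈ secantConic K
  · obtain ⟨y, hy⟩ := hx
    have hroots : ({u | u ^ 3 + u ^ 2 = x ^ 3 + x ^ 2} : Finset K) = {x, y, -1 - x - y} := by
      ext u
      simp [cube_add_sq_eq_iff_of_mem_secantConic hy]
    rw [hroots, secantConic_fiber_eq_of_mem hy]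
    refine card_ordered_pairs_add_three ?_
    -- A triple root would satisfy `3x = -1` and `3x² = -2x`, hence `x = 0` and `0 = -1`.
    rintro ⟨rfl, hz⟩
    rw [mem_secantConic] at hy
    grind
  · have hroots (u : K) : u ^ 3 + u ^ 2 = x ^ 3 + x ^ 2 ↔ u = x :=
      cube_add_sq_eq_iff.trans (or_iff_left (not_exists.mp hx u))
    have hpairs : {p ∈ secantConic K | p.1 = x} = ∅ :=
      Finset.filter_eq_empty_iff.mpr fun p hp hpx ↦ hx ⟨p.2, hpx ▸ hp⟩
    simp [hroots, hpairs, Finset.filter_eq']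

theorem three_mul_card_compl_image_cube_add_sq :
    3 * #(Finset.univ.image fun x : K ↦ x ^ 3 + x ^ 2)ᶜ = #(secantConic K) := by
  have hfiber (a : K) : #{p ∈ secantConic K | p.1 ^ 3 + p.1 ^ 2 = a} + 3 =
      3 * #{u : K | u ^ 3 + u ^ 2 = a} +
        if a ∈ (Finset.univ.image fun x : K ↦ x ^ 3 + x ^ 2)ᶜ then 3 else 0 := by
    split_ifs with ha
    · have ha : ∀ x : K, x ^ 3 + x ^ 2 ≠ a := by simpa using ha
      simp [ha]
    · obtain ⟨x, -, rfl⟩ := by simpa using ha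
      exact card_secantConic_fiber_add_three x
  have hsum := Finset.sum_congr rfl fun a (_ : a ∈ Finset.univ) ↦ hfiber a
  rw [Finset.sum_add_distrib, Finset.sum_add_distrib, ← Finset.mul_sum,
    ← Finset.card_eq_sum_card_fiberwise (by simp), ← Finset.card_eq_sum_card_fiberwise (by simp),
    ← Finset.sum_filter, Finset.filter_mem_eq_inter, Finset.univ_inter] at hsum
  simp only [Finset.sum_const, Finset.card_univ, smul_eq_mul] at hsum
  omega

theorem three_mul_ncard_compl_range_cube_add_sq (K : Type*) [Field K] [Finite K] :
    3 * ((Set.range fun x : K ↦ x ^ 3 + x ^ 2)ᶜ.ncard : ℤ) =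
      Nat.card K - legendreSym 3 (Nat.card K) := by
  classical
  have : Fintype K := Fintype.ofFinite K
  have hset : (Set.range fun x : K ↦ x ^ 3 + x ^ 2)ᶜ =
      ((Finset.univ.image fun x : K ↦ x ^ 3 + x ^ 2)ᶜ : Finset K) := by
    simp
  rw [hset, Set.ncard_coe_finset, Nat.card_eq_fintype_card]
  have := three_mul_card_compl_image_cube_add_sq (K := K)
  have := card_secantConic_add_card_roots (K := K)
  have := card_roots_sq_add_self_add_one (K := K)
  omega

end Counting

section Finite

variable {F L : Type*} [Field F] [Field L] [Finite L] [Algebra F L]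

theorem splits_map_of_natDegree_dvd_finrank {f : F[X]} (hf : Irreducible f)
    (h : f.natDegree ∣ Module.finrank F L) : (f.map (algebraMap F L)).Splits := by
  have : Fintype L := Fintype.ofFinite L
  have : Finite F := Finite.of_injective _ (algebraMap F L).injective
  have hsplit := IsSplittingField.splits L (X ^ Fintype.card L - X : F[X])
  rw [hf.natDegree_dvd_iff_dvd_X_pow_card_pow_sub_X, ← Module.natCard_eq_pow_finrank,
    Nat.card_eq_fintype_card] at h
  exact hsplit.of_dvd (map_ne_zero (FiniteField.X_pow_card_sub_X_ne_zero F Fintype.one_lt_card))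
    (map_dvd (mapRingHom (algebraMap F L)) h)

theorem exists_aeval_eq_zero_iff_natDegree_dvd_finrank {f : F[X]} (hf : Irreducible f) :
    (∃ b : L, aeval b f = 0) ↔ f.natDegree ∣ Module.finrank F L := by
  constructor
  · rintro ⟨b, hb⟩
    rw [minpoly.Irreducible.eq_minpoly hf hb,
      natDegree_C_mul (leadingCoeff_ne_zero.mpr hf.ne_zero)]
    exact minpoly.degree_dvd (Algebra.IsIntegral.isIntegral b)
  · intro h
    simpa using (splits_map_of_natDegree_dvd_finrank hf h).exists_eval_eq_zero
      (by simpa using hf.degree_pos.ne')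

theorem ncard_setOf_minpoly_eq {f : F[X]} (hm : f.Monic) (hf : Irreducible f)
    (h : f.natDegree ∣ Module.finrank F L) : {a : L | minpoly F a = f}.ncard = f.natDegree := by
  have : Finite F := Finite.of_injective _ (algebraMap F L).injective
  have heq : {a : L | minpoly F a = f} = f.rootSet L := by
    ext a
    rw [mem_rootSet_of_ne hf.ne_zero]
    exact ⟨fun ha ↦ ha ▸ minpoly.aeval F a,
      fun ha ↦ (minpoly.eq_of_irreducible_of_monic hf ha hm).symm⟩
  rw [heq, ← Nat.card_coe_set_eq, Nat.card_eq_fintype_card]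
  exact card_rootSet_eq_natDegree (PerfectField.separable_of_irreducible hf)
    (splits_map_of_natDegree_dvd_finrank hf h)

theorem ncard_setOf_minpoly_mem {S : Set F[X]} {d : ℕ} (hd : d ∣ Module.finrank F L)
    (hS : ∀ f ∈ S, f.Monic ∧ Irreducible f ∧ f.natDegree = d) :
    {a : L | minpoly F a ∈ S}.ncard = d * S.ncard := by
  classical
  have : Fintype L := Fintype.ofFinite L
  have hfiber (f) (hf : f ∈ S) : {a : L | minpoly F a = f}.ncard = d := by
    obtain ⟨hm, hirr, rfl⟩ := hS f hf
    exact ncard_setOf_minpoly_eq hm hirr hd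
  have hd0 (f) (hf : f ∈ S) : d ≠ 0 := by
    obtain ⟨-, hirr, rfl⟩ := hS f hf
    exact hirr.natDegree_pos.ne'
  have hrange : S ⊆ Set.range (minpoly F : L → F[X]) := fun f hf ↦
    Set.nonempty_of_ncard_ne_zero (hfiber f hf ▸ hd0 f hf)
  lift S to Finset F[X] using (Set.finite_range _).subset hrange
  have hA := Finset.card_eq_sum_card_fiberwise (f := minpoly F)
    (s := {a : L | minpoly F a ∈ S}) (t := S) fun a ha ↦ by simpa using ha
  rw [Finset.sum_const_nat (m := d)] at hA
  · rw [Set.ncard_coe_finset, mul_comm, ← hA, ← Set.ncard_coe_finset]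
    simp
  · intro f hf
    rw [← hfiber f hf, ← Set.ncard_coe_finset]
    congr 1
    ext a
    simp only [Finset.coe_filter, Finset.mem_filter, Finset.mem_univ, true_and,
      Set.mem_ofPred_eq, and_iff_right_iff_imp]
    rintro rfl
    exact hf

end Finite

section Comp

variable {F L : Type*} [Field F] [Field L] [Algebra F L]

theorem exists_aeval_eq_iff_exists_aeval_minpoly_comp [Normal F L] {a : L} {g : F[X]} :
    (∃ x : L, aeval x g = a) ↔ ∃ b : L, aeval b ((minpoly F a).comp g) = 0 := by
  simp only [aeval_comp]
  constructor
  · rintro ⟨x, rfl⟩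
    exact ⟨x, minpoly.aeval F _⟩
  · rintro ⟨b, hb⟩
    obtain ⟨σ, hσ⟩ := minpoly.exists_algEquiv_of_root (Algebra.IsAlgebraic.isAlgebraic a) hb
    exact ⟨σ b, by rw [aeval_algHom_apply, hσ]⟩

open IntermediateField in
theorem irreducible_minpoly_comp {a : L} (ha : IsIntegral F a) {g : F[X]} (hg : g.Monic)
    (hdeg : g.natDegree ∈ Finset.Icc 1 3) (hroot : ∀ x : L, aeval x g ≠ a) :
    Irreducible ((minpoly F a).comp g) := by
  refine irreducible_comp (minpoly.monic ha) hg (minpoly.irreducible ha) fun E _ _ x hx ↦ ?_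
  have hxi : IsIntegral F x := minpoly.ne_zero_iff.mp (hx ▸ minpoly.ne_zero ha)
  refine irreducible_of_degree_le_three_of_not_isRoot (by simpa using hdeg) fun y hy ↦ ?_
  have hy : aeval y g = AdjoinSimple.gen F x := by
    simpa [sub_eq_zero] using hy
  let pb := adjoin.powerBasis hxi
  have hpb : pb.gen = AdjoinSimple.gen F x := adjoin.powerBasis_gen hxi
  have ha0 : aeval a (minpoly F pb.gen) = 0 := by
    rw [hpb, minpoly_gen, hx, minpoly.aeval]
  apply hroot (pb.lift a ha0 y)
  rw [aeval_algHom_apply, hy, ← hpb, pb.lift_gen]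

theorem forall_aeval_ne_iff [Finite L] (a : L) {g : F[X]} (hg : g.Monic)
    (hdeg : g.natDegree ∈ Finset.Icc 1 3) :
    (∀ x : L, aeval x g ≠ a) ↔ Irreducible ((minpoly F a).comp g) ∧
      ¬ (minpoly F a).natDegree * g.natDegree ∣ Module.finrank F L := by
  have : Finite F := Finite.of_injective _ (algebraMap F L).injective
  have hnot (h : Irreducible ((minpoly F a).comp g)) : (∀ x : L, aeval x g ≠ a) ↔
      ¬ (minpoly F a).natDegree * g.natDegree ∣ Module.finrank F L := by
    rw [← natDegree_comp, ← exists_aeval_eq_zero_iff_natDegree_dvd_finrank h,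
      ← exists_aeval_eq_iff_exists_aeval_minpoly_comp, not_exists]
  constructor
  · intro h
    have hirr := irreducible_minpoly_comp (Algebra.IsIntegral.isIntegral a) hg hdeg h
    exact ⟨hirr, (hnot hirr).mp h⟩
  · exact fun ⟨hirr, hdvd⟩ ↦ (hnot hirr).mpr hdvd

theorem ratTransform_one_right {K : Type*} [Field K] (g f : K[X]) :
    ratTransform g 1 f = f.comp g := by
  simp [ratTransform, comp, eval₂_eq_sum_range]

theorem ncard_compl_range_aeval_eq_sum [Finite L] {g : F[X]} (hg : g.Monic)
    (hdeg : g.natDegree ∈ Finset.Icc 1 3) :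
    (Set.range fun x : L ↦ aeval x g)ᶜ.ncard =
      ∑ d ∈ (Module.finrank F L).divisors with ¬ d * g.natDegree ∣ Module.finrank F L,
        d * (IrredSet g 1 d).ncard := by
  classical
  have : Fintype L := Fintype.ofFinite L
  have hA (a : L) : a ∈ (Set.range fun x : L ↦ aeval x g)ᶜ ↔
      Irreducible ((minpoly F a).comp g) ∧
        ¬ (minpoly F a).natDegree * g.natDegree ∣ Module.finrank F L := by
    simpa using forall_aeval_ne_iff a hg hdeg
  rw [Set.ncard_eq_toFinset_card', Finset.card_eq_sum_card_fiberwise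
    (f := fun a : L ↦ (minpoly F a).natDegree)
    (t := {d ∈ (Module.finrank F L).divisors | ¬ d * g.natDegree ∣ Module.finrank F L})]
  · refine Finset.sum_congr rfl fun d hd ↦ ?_
    rw [Finset.mem_filter, Nat.mem_divisors] at hd
    rw [← ncard_setOf_minpoly_mem (L := L) hd.1.1 fun f hf ↦ ⟨hf.1, hf.2.1, hf.2.2.1⟩,
      ← Set.ncard_coe_finset]
    congr 1
    ext a
    have ha : IsIntegral F a := Algebra.IsIntegral.isIntegral a
    simp only [Finset.coe_filter, Set.mem_toFinset, Set.mem_ofPred_eq, hA, IrredSet,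
      ratTransform_one_right, minpoly.monic ha, minpoly.irreducible ha, true_and]
    constructor
    · rintro ⟨⟨hirr, -⟩, hda⟩
      exact ⟨hda, hirr⟩
    · rintro ⟨rfl, hirr⟩
      exact ⟨⟨hirr, hd.2⟩, rfl⟩
  · intro a ha
    have ha := ((hA a).mp (by simpa using ha)).2
    have hdvd : (minpoly F a).natDegree ∣ Module.finrank F L :=
      minpoly.degree_dvd (Algebra.IsIntegral.isIntegral a)
    simp [ha, hdvd, Module.finrank_pos.ne']

end Comp

theorem mul_Ifun {n : ℕ} (hn : n ≠ 0) (q : ℚ) :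
    n * Ifun n q = ∑ d ∈ n.divisors, (ArithmeticFunction.moebius d : ℚ) * q ^ (n / d) := by
  rw [Ifun]
  field_simp

theorem eq_mul_Ifun_sub_Ifun_of_sum_divisors {s : Set ℕ} (hs : ∀ m n, m ∣ n → n ∈ s → m ∈ s)
    {f : ℕ → ℚ} {x y : ℚ} (hf : ∀ n > 0, n ∈ s → ∑ d ∈ n.divisors, f d = x ^ n - y ^ n)
    {n : ℕ} (hn : n ≠ 0) (hns : n ∈ s) : f n = n * (Ifun n x - Ifun n y) := by
  rw [mul_sub, mul_Ifun hn, mul_Ifun hn, ← Finset.sum_sub_distrib,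
    ← (ArithmeticFunction.sum_eq_iff_sum_mul_moebius_eq_on s hs).mp hf n hn.pos hns,
    Nat.sum_divisorsAntidiagonal (f := fun d e ↦ (ArithmeticFunction.moebius d : ℚ) *
      (x ^ e - y ^ e))]
  simp only [mul_sub]

theorem filter_divisors_prime_pow_mul {p m : ℕ} (hp : p.Prime) (k : ℕ) (hm : ¬ p ∣ m) :
    {d ∈ (p ^ k * m).divisors | ¬ d * p ∣ p ^ k * m} = m.divisors.image (p ^ k * ·) := by
  have hpk : 0 < p ^ k := Nat.pow_pos hp.pos
  have hm0 : m ≠ 0 := by rintro rfl; simp at hm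
  ext d
  simp only [Finset.mem_filter, Finset.mem_image, Nat.mem_divisors]
  constructor
  · rintro ⟨⟨⟨c, hc⟩, -⟩, hd⟩
    have hpc : ¬ p ∣ c := fun h ↦ hd (hc ▸ mul_dvd_mul_left d h)
    have hcop : (p ^ k).Coprime c := ((hp.coprime_iff_not_dvd).mpr hpc).pow_left k
    obtain ⟨e, rfl⟩ : p ^ k ∣ d := hcop.dvd_of_dvd_mul_right ⟨m, hc.symm⟩
    refine ⟨e, ⟨⟨c, ?_⟩, hm0⟩, rfl⟩
    exact Nat.eq_of_mul_eq_mul_left hpk (hc.trans (mul_assoc ..))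
  · rintro ⟨e, ⟨he, -⟩, rfl⟩
    refine ⟨⟨mul_dvd_mul_left _ he, by positivity⟩, fun h ↦ hm ?_⟩
    rw [mul_assoc] at h
    exact dvd_of_mul_left_dvd (Nat.dvd_of_mul_dvd_mul_left hpk h)

theorem legendreSym_three_pow_three_pow_mul (a : ℤ) (k m : ℕ) :
    legendreSym 3 (a ^ (3 ^ k * m)) = legendreSym 3 a ^ m := by
  have h (b : ℤ) : legendreSym 3 (b ^ 3 ^ k) = legendreSym 3 b := by
    rw [legendreSym, Int.cast_pow, map_pow, ← MulChar.pow_apply' _ (by positivity),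
      (quadraticChar_isQuadratic (ZMod 3)).pow_odd (Odd.pow (by decide)), legendreSym]
  rw [mul_comm, pow_mul, h]
  exact map_pow (legendreSym.hom 3) a m

theorem sum_mul_ncard_irredSet_cube_add_sq (F : Type*) [Field F] [Finite F] {n : ℕ} (hn : n ≠ 0) :
    3 * ∑ d ∈ n.divisors with ¬ d * 3 ∣ n, (d * (IrredSet (X ^ 3 + X ^ 2 : F[X]) 1 d).ncard : ℤ) =
      Nat.card F ^ n - legendreSym 3 (Nat.card F ^ n) := by
  have : NeZero n := ⟨hn⟩
  obtain ⟨p, _⟩ := CharP.exists F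
  have : Fact p.Prime := ⟨CharP.char_is_prime F p⟩
  have hmonic : (X ^ 3 + X ^ 2 : F[X]).Monic := by monicity!
  have hdeg : (X ^ 3 + X ^ 2 : F[X]).natDegree = 3 := by compute_degree!
  have hsum := ncard_compl_range_aeval_eq_sum (L := FiniteField.Extension F p n) hmonic
    (by simp [hdeg])
  have hcard := three_mul_ncard_compl_range_cube_add_sq (FiniteField.Extension F p n)
  simp only [map_add, map_pow, aeval_X, hdeg, FiniteField.finrank_extension] at hsum
  rw [FiniteField.natCard_extension, hsum] at hcard
  exact_mod_cast hcard

theorem sum_divisors_mul_ncard_irredSet_cube_add_sq (F : Type*) [Field F] [Finite F] (k : ℕ)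
    {m : ℕ} (hm : ¬ 3 ∣ m) :
    ∑ e ∈ m.divisors,
        (3 * ((3 ^ k * e : ℕ) * (IrredSet (X ^ 3 + X ^ 2 : F[X]) 1 (3 ^ k * e)).ncard) : ℚ) =
      ((Nat.card F : ℚ) ^ 3 ^ k) ^ m - (legendreSym 3 (Nat.card F) : ℚ) ^ m := by
  have hn : 3 ^ k * m ≠ 0 := by
    have : m ≠ 0 := by rintro rfl; simp at hm
    positivity
  have h := sum_mul_ncard_irredSet_cube_add_sq F hn
  rw [filter_divisors_prime_pow_mul Nat.prime_three k hm, Finset.sum_image, Finset.mul_sum,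
    legendreSym_three_pow_three_pow_mul, pow_mul] at h
  · exact_mod_cast h
  · exact fun a _ b _ hab ↦ Nat.eq_of_mul_eq_mul_left (by positivity) hab

theorem nThree_three_pow_mul (k : ℕ) {m : ℕ} (hm : ¬ 3 ∣ m) : nThree (3 ^ k * m) = 3 ^ k := by
  have hm0 : m ≠ 0 := by rintro rfl; simp at hm
  simp [nThree, Nat.factorization_mul, hm0, Nat.prime_three.factorization_self,
    Nat.factorization_eq_zero_of_not_dvd hm]

theorem stmt16_general (F : Type*) [Field F] [Finite F] {n : ℕ} (hn : n ≠ 0) :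
    ((IrredSet (X ^ 3 + X ^ 2 : F[X]) 1 n).ncard : ℚ) =
      1 / (3 * (nThree n : ℚ)) * (Ifun (n / nThree n) ((Nat.card F : ℚ) ^ nThree n) -
        Ifun (n / nThree n) (legendreSym 3 (Nat.card F))) := by
  obtain ⟨k, m, hm, rfl⟩ := Nat.exists_eq_pow_mul_and_not_dvd hn 3 (by norm_num)
  have hm0 : m ≠ 0 := by rintro rfl; simp at hm
  have h := eq_mul_Ifun_sub_Ifun_of_sum_divisors (s := {m | ¬ 3 ∣ m})
    (fun _ _ hdvd hn h ↦ hn (h.trans hdvd))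
    (fun m _ hm ↦ sum_divisors_mul_ncard_irredSet_cube_add_sq F k hm) hm0 hm
  rw [nThree_three_pow_mul k hm, Nat.mul_div_cancel_left _ (by positivity)]
  push_cast at h ⊢
  field_simp
  refine mul_left_cancel₀ (Nat.cast_ne_zero.mpr hm0 : (m : ℚ) ≠ 0) ?_
  linear_combination h

/-- Theorem 16: over `F_q` of characteristic two,
`|𝓘(x³+x², 1, n, q)| = (1/(3n₃)) (I(n/n₃, q^{n₃}) − I(n/n₃, ε))`, where `ε = 1` if
`q ≡ 1 (mod 3)` and `ε = −1` if `q ≡ −1 (mod 3)`. -/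
theorem stmt16 {F : Type*} [Field F] [Fintype F] [CharP F 2] (q : ℕ)
    (hq : Fintype.card F = q) (n : ℕ) (hn : 1 < n) :
    ∀ ε : ℚ, ((q % 3 = 1 ∧ ε = 1) ∨ (q % 3 = 2 ∧ ε = -1)) →
      ((IrredSet (X ^ 3 + X ^ 2 : F[X]) 1 n).ncard : ℚ) =
        (1 / (3 * (nThree n : ℚ))) *
          (Ifun (n / nThree n) ((q : ℚ) ^ nThree n) - Ifun (n / nThree n) ε) := by
  subst hq
  intro ε hε
  have hε : ε = legendreSym 3 (Fintype.card F) := by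
    rw [legendreSym_three_natCast]
    rcases hε with ⟨h, rfl⟩ | ⟨h, rfl⟩ <;> simp [h]
  rw [hε, ← Nat.card_eq_fintype_card]
  exact stmt16_general F (Nat.ne_zero_of_lt hn)
end

section
/- Let F_q be a finite field of characteristic two and let R(x) = g(x)/h(x) with either g(x) = x^3 + c, h(x) = x for some nonzero c ∈ F_q, or g(x) = x^3 + c, h(x) = x + c for some c ∈ F_q \ F_2. Then there exists a constant C, depending only on g, h and q, such that for every integer n > 1, | |𝓘(g, h, n, q)| − q^n/(3n) | ≤ C · q^{n/2}/n. -/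
open Polynomial

/-!
Let `K` be the extension of `F` of degree `n`. If `α` generates `K` over `F` and has minimal
polynomial `f`, then, as in Capelli's lemma, `f_R` is irreducible over `F` exactly when `g - α h` is
irreducible over `K`. Each `f` has `n` roots in `K` and all but `O(q ^ (n / 2))` elements of `K` are
generators, so it suffices to show that `g - α h` is irreducible for about one third of the `α ∈ K`.

As `h` is linear and prime to `g`, these polynomials are, up to reparametrization, the cubics
`X³ + a X² + α X + d` with `d ≠ 0`. Let `r α` be the number of roots of such a cubic, which is
irreducible when `r α = 0`. Every `u ≠ 0` is a root for exactly one `α`, which gives the sum of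
`r α`; the sum of `(r α)²` counts the pairs of roots of a common cubic. The pairs `u ≠ v` satisfy
`u v (u + v + a) = d`, which is the curve `y² + a x y + d y = x³` for `x = d / u`, `y = d v / u`, so
the number of irreducible cubics follows from a Hasse bound with an error `O(√|K|)`.

The bound is obtained by Stepanov's method in the form of Bombieri. On the coordinate ring of a
Weierstrass curve, the order of the pole at infinity bounds the number of zeros, and an auxiliary
function of small order is constructed which vanishes at all points on which Frobenius acts as a
given automorphism. The identity gives the upper bound for the number of rational points. The
negation gives the lower bound, as every `x ∈ K` lies below two points on which Frobenius acts as
the identity or as the negation.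
-/

section Counting

variable {α β : Type*} [Finite α]

lemma sum_ncard_fiber (s : Set α) {f : α → β} {t : Finset β} (hf : Set.MapsTo f s t) :
    ∑ b ∈ t, {a ∈ s | f a = b}.ncard = s.ncard := by
  classical
  have := Fintype.ofFinite α
  simp only [Set.ncard_eq_toFinset_card', Set.toFinset_ofPred]
  rw [Finset.card_eq_sum_card_fiberwise (s := s.toFinset) (by simpa using hf)]
  refine Finset.sum_congr rfl fun b _ ↦ congrArg _ ?_
  ext
  simp

lemma sum_sq_ncard_fiber [Fintype β] (s : Set α) (f : α → β) :
    ∑ b, {a ∈ s | f a = b}.ncard ^ 2 = {P ∈ s ×ˢ s | f P.1 = f P.2}.ncard := by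
  rw [← sum_ncard_fiber (f := fun P : α × α ↦ f P.1) (t := Finset.univ) _ (by simp)]
  refine Finset.sum_congr rfl fun b _ ↦ ?_
  rw [sq, ← Set.ncard_prod]
  congr 1
  ext P
  simp only [Set.mem_prod, Set.mem_ofPred_eq]
  grind

lemma ncard_diag_add_ncard_offDiag (s : Set (α × α)) :
    {a | (a, a) ∈ s}.ncard + {P ∈ s | P.1 ≠ P.2}.ncard = s.ncard := by
  rw [← Set.ncard_image_of_injective {a | (a, a) ∈ s} (f := fun a ↦ (a, a))
    fun _ _ h ↦ congrArg Prod.fst h, ← Set.ncard_union_eq]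
  · congr 1
    ext ⟨a, b⟩
    simp only [Set.mem_union, Set.mem_image, Set.mem_ofPred_eq, Prod.mk.injEq]
    grind
  · rw [Set.disjoint_left]
    rintro _ ⟨a, -, rfl⟩ h
    exact h.2 rfl

omit [Finite α] in
lemma ncard_setOf_prod [Fintype α] [Finite β] (r : α → β → Prop) :
    {P : α × β | r P.1 P.2}.ncard = ∑ a, {b | r a b}.ncard := by
  calc {P : α × β | r P.1 P.2}.ncard = Nat.card {P : α × β // r P.1 P.2} :=
        (Nat.card_coe_set_eq _).symm
    _ = Nat.card (Σ a, {b // r a b}) := Nat.card_congr (Equiv.subtypeProdEquivSigmaSubtype r)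
    _ = ∑ a, {b | r a b}.ncard := Nat.card_sigma

end Counting

section PoleOrder

open WeierstrassCurve.Affine WeierstrassCurve.Affine.CoordinateRing

variable {K : Type*} [Field K] {W : WeierstrassCurve.Affine K}

/-- The order of the pole at infinity of a regular function on the affine part of a Weierstrass
curve, with value `⊥` at the zero function. Since the point at infinity is the only one above
`x = ∞`, it is the degree of the norm down to `K[X]`. -/
noncomputable def poleOrder (f : W.CoordinateRing) : WithBot ℕ :=
  (Algebra.norm K[X] f).degree

lemma poleOrder_smul_basis (p q : K[X]) :
    poleOrder (p • (1 : W.CoordinateRing) + q • mk W X) =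
      max (2 • p.degree) (2 • q.degree + 3) :=
  degree_norm_smul_basis p q

lemma poleOrder_eq_bot {f : W.CoordinateRing} : poleOrder f = ⊥ ↔ f = 0 := by
  have : Module.Finite K[X] W.CoordinateRing := .of_basis (CoordinateRing.basis W)
  rw [poleOrder, degree_eq_bot, Algebra.norm_eq_zero_iff]

@[simp]
lemma poleOrder_zero : poleOrder (0 : W.CoordinateRing) = ⊥ := poleOrder_eq_bot.2 rfl

lemma poleOrder_mul (f g : W.CoordinateRing) :
    poleOrder (f * g) = poleOrder f + poleOrder g := by
  simp [poleOrder, degree_mul]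

lemma poleOrder_pow (f : W.CoordinateRing) (n : ℕ) : poleOrder (f ^ n) = n • poleOrder f := by
  simp [poleOrder, degree_pow]

lemma poleOrder_smul {c : K} (hc : c ≠ 0) (f : W.CoordinateRing) :
    poleOrder (c • f) = poleOrder f := by
  rw [← algebraMap_smul K[X] c f, Algebra.smul_def, poleOrder, map_mul,
    Algebra.norm_algebraMap_of_basis (CoordinateRing.basis W), degree_mul, degree_pow,
    Polynomial.algebraMap_eq, degree_C hc, nsmul_zero, zero_add, poleOrder]

lemma poleOrder_neg (f : W.CoordinateRing) : poleOrder (-f) = poleOrder f := by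
  rw [← neg_one_smul K f, poleOrder_smul (neg_ne_zero.2 one_ne_zero)]

lemma poleOrder_algEquiv (τ : W.CoordinateRing ≃ₐ[K[X]] W.CoordinateRing)
    (f : W.CoordinateRing) : poleOrder (τ f) = poleOrder f := by
  rw [poleOrder, Algebra.norm_eq_of_algEquiv, poleOrder]

lemma poleOrder_add_le (f g : W.CoordinateRing) :
    poleOrder (f + g) ≤ max (poleOrder f) (poleOrder g) := by
  obtain ⟨p, q, rfl⟩ := exists_smul_basis_eq f
  obtain ⟨p', q', rfl⟩ := exists_smul_basis_eq g
  rw [add_add_add_comm, ← add_smul, ← add_smul]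
  simp only [poleOrder_smul_basis]
  have hdouble : Monotone fun d : WithBot ℕ ↦ 2 • d := fun _ _ h ↦ nsmul_le_nsmul_right h 2
  have hshift : Monotone fun d : WithBot ℕ ↦ 2 • d + 3 := fun _ _ h ↦
    add_le_add_left (hdouble h) 3
  have hp := (hdouble (degree_add_le p p')).trans_eq hdouble.map_max
  have hq := (hshift (degree_add_le q q')).trans_eq hshift.map_max
  exact (max_le_max hp hq).trans_eq (max_max_max_comm _ _ _ _)

lemma poleOrder_sum_le {ι : Type*} (t : Finset ι) (f : ι → W.CoordinateRing) :
    poleOrder (∑ i ∈ t, f i) ≤ t.sup fun i ↦ poleOrder (f i) := by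
  classical
  induction t using Finset.induction_on with
  | empty => simp
  | insert i t hi ih =>
    rw [Finset.sum_insert hi, Finset.sup_insert]
    exact (poleOrder_add_le _ _).trans (max_le_max_left _ ih)

lemma sum_ne_zero_of_poleOrder_injOn {ι : Type*} {t : Finset ι} {f : ι → W.CoordinateRing}
    (hf : Set.InjOn (fun i ↦ poleOrder (f i)) {i | i ∈ t ∧ f i ≠ 0}) {i : ι} (hi : i ∈ t)
    (hfi : f i ≠ 0) : ∑ i ∈ t, f i ≠ 0 := by
  classical
  obtain ⟨m, hm, hmax⟩ := t.exists_max_image (fun i ↦ poleOrder (f i)) ⟨i, hi⟩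
  have hfm : ⊥ < poleOrder (f m) :=
    (bot_lt_iff_ne_bot.2 (poleOrder_eq_bot.not.2 hfi)).trans_le (hmax i hi)
  have hrest : poleOrder (∑ j ∈ t.erase m, f j) < poleOrder (f m) := by
    refine (poleOrder_sum_le _ _).trans_lt ((Finset.sup_lt_iff hfm).2 fun j hj ↦ ?_)
    obtain ⟨hjm, hj⟩ := Finset.mem_erase.1 hj
    refine (hmax j hj).lt_of_ne fun h ↦ hjm (hf ⟨hj, fun h0 ↦ ?_⟩ ⟨hm, ?_⟩ h)
    · exact hfm.ne' (by rw [← h, h0, poleOrder_zero])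
    · exact poleOrder_eq_bot.not.1 hfm.ne'
  rw [← Finset.add_sum_erase t f hm]
  intro h
  exact hrest.ne (by rw [eq_neg_of_add_eq_zero_left h, poleOrder_neg])

variable (W) in
/-- A function with a pole of order `n + 2` at infinity: `x ^ (n / 2 + 1)` for even `n` and
`x ^ (n / 2) * y` for odd `n`. Together with `1` these form a basis of the coordinate ring. -/
noncomputable def poleMonomial (n : ℕ) : W.CoordinateRing :=
  if Even n then (X ^ (n / 2 + 1) : K[X]) • (1 : W.CoordinateRing) + (0 : K[X]) • mk W X
  else (0 : K[X]) • (1 : W.CoordinateRing) + (X ^ (n / 2) : K[X]) • mk W X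

lemma poleOrder_poleMonomial (n : ℕ) : poleOrder (poleMonomial W n) = (n + 2 : ℕ) := by
  have hbot : 2 • (⊥ : WithBot ℕ) = ⊥ := rfl
  unfold poleMonomial
  split_ifs with h
  · obtain ⟨k, rfl⟩ := h
    rw [poleOrder_smul_basis, degree_X_pow, degree_zero, hbot, WithBot.bot_add, max_bot_right,
      nsmul_eq_mul]
    norm_cast
    omega
  · obtain ⟨k, rfl⟩ := Nat.not_even_iff_odd.1 h
    rw [poleOrder_smul_basis, degree_X_pow, degree_zero, hbot, max_bot_left, nsmul_eq_mul]
    norm_cast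
    omega

lemma poleMonomial_ne_zero (n : ℕ) : poleMonomial W n ≠ 0 := by
  rw [ne_eq, ← poleOrder_eq_bot, poleOrder_poleMonomial]
  exact WithBot.coe_ne_bot

variable (W) in
/-- The Riemann–Roch space `L(n∞)` of functions whose pole at infinity has order at most `n`. -/
noncomputable def poleSpace (n : ℕ) : Submodule K W.CoordinateRing where
  carrier := {f | poleOrder f ≤ n}
  add_mem' hf hg := (poleOrder_add_le _ _).trans (max_le hf hg)
  zero_mem' := by simp
  smul_mem' c f hf := by
    rcases eq_or_ne c 0 with rfl | hc
    · simp
    · simpa [poleOrder_smul hc] using hf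

lemma mem_poleSpace {n : ℕ} {f : W.CoordinateRing} : f ∈ poleSpace W n ↔ poleOrder f ≤ n :=
  Iff.rfl

lemma exists_poleSpace_le_range (n : ℕ) :
    ∃ Φ : degreeLT K (n / 2 + 1) × degreeLT K ((n + 1) / 2) →ₗ[K] W.CoordinateRing,
      poleSpace W n ≤ LinearMap.range Φ := by
  refine ⟨((degreeLT K _).subtype.smulRight 1).coprod
    ((degreeLT K _).subtype.smulRight (mk W X)), fun f hf ↦ ?_⟩
  obtain ⟨p, q, rfl⟩ := exists_smul_basis_eq f
  rw [mem_poleSpace, poleOrder_smul_basis, max_le_iff, nsmul_eq_mul, nsmul_eq_mul] at hf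
  have hp : p ∈ degreeLT K (n / 2 + 1) := mem_degreeLT.2 <| by
    rcases eq_or_ne p 0 with rfl | hp
    · exact degree_zero.trans_lt (WithBot.bot_lt_coe _)
    rw [degree_eq_natDegree hp] at hf ⊢
    norm_cast at hf ⊢
    omega
  have hq : q ∈ degreeLT K ((n + 1) / 2) := mem_degreeLT.2 <| by
    rcases eq_or_ne q 0 with rfl | hq
    · exact degree_zero.trans_lt (WithBot.bot_lt_coe _)
    rw [degree_eq_natDegree hq] at hf ⊢
    norm_cast at hf ⊢
    omega
  exact ⟨(⟨p, hp⟩, ⟨q, hq⟩), by simp⟩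

instance (n : ℕ) : Module.Finite K (poleSpace W n) :=
  have ⟨_, hΦ⟩ := exists_poleSpace_le_range (W := W) n
  Submodule.finiteDimensional_of_le hΦ

lemma finrank_poleSpace_le (n : ℕ) : Module.finrank K (poleSpace W n) ≤ n + 1 := by
  obtain ⟨Φ, hΦ⟩ := exists_poleSpace_le_range (W := W) n
  calc Module.finrank K (poleSpace W n)
      ≤ Module.finrank K (LinearMap.range Φ) := Submodule.finrank_mono hΦ
    _ ≤ Module.finrank K (degreeLT K (n / 2 + 1) × degreeLT K ((n + 1) / 2)) :=
        Φ.finrank_range_le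
    _ = n + 1 := by
        rw [Module.finrank_prod, (degreeLTEquiv K _).finrank_eq, (degreeLTEquiv K _).finrank_eq,
          Module.finrank_fin_fun, Module.finrank_fin_fun]
        omega

theorem finite_and_ncard_zeros_le {L : Type*} [CommRing L] [IsDomain L] [Algebra K L]
    {G : W.CoordinateRing} (hG : G ≠ 0) {D : ℕ} (hD : poleOrder G ≤ D) :
    {φ : W.CoordinateRing →ₐ[K] L | φ G = 0}.Finite ∧
      {φ : W.CoordinateRing →ₐ[K] L | φ G = 0}.ncard ≤ D := by
  let I : Ideal W.CoordinateRing := Ideal.span {G}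
  have hI : I ≠ ⊥ := Ideal.span_singleton_eq_bot.not.2 hG
  have : Module.Finite K (W.CoordinateRing ⧸ I) :=
    .equiv (I.quotientEquivDirectSum K (CoordinateRing.basis W) hI).symm
  have hsub : {φ : W.CoordinateRing →ₐ[K] L | φ G = 0} ⊆
      Set.range fun ψ : W.CoordinateRing ⧸ I →ₐ[K] L ↦ ψ.comp (Ideal.Quotient.mkₐ K I) := by
    intro φ hφ
    have hI : I ≤ RingHom.ker φ := (Ideal.span_singleton_le_iff_mem _).2 hφ
    exact ⟨Ideal.Quotient.liftₐ I φ hI, Ideal.Quotient.liftₐ_comp I φ hI⟩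
  refine ⟨(Set.finite_range _).subset hsub, ?_⟩
  calc {φ : W.CoordinateRing →ₐ[K] L | φ G = 0}.ncard
      ≤ (Set.range fun ψ : W.CoordinateRing ⧸ I →ₐ[K] L ↦
          ψ.comp (Ideal.Quotient.mkₐ K I)).ncard := Set.ncard_le_ncard hsub (Set.finite_range _)
    _ ≤ Nat.card (W.CoordinateRing ⧸ I →ₐ[K] L) := Finite.card_range_le _
    _ ≤ Module.finrank K (W.CoordinateRing ⧸ I) := card_algHom_le_finrank K _ L
    _ = (Algebra.norm K[X] G).natDegree :=
        finrank_quotient_span_eq_natDegree_norm (CoordinateRing.basis W) hG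
    _ ≤ D := natDegree_le_of_degree_le hD

end PoleOrder

section Stepanov

open WeierstrassCurve.Affine WeierstrassCurve.Affine.CoordinateRing

variable {K : Type*} [Field K] {W : WeierstrassCurve.Affine K}

/-- The `L`-valued points of the affine curve on which the `q`-power Frobenius of `L` acts as the
automorphism `τ` of the curve does, a point being encoded as the homomorphism evaluating functions
at it. For `L = K` of cardinality `q` and `τ = 1` these are the rational points. -/
def twistedPoints (q : ℕ) (τ : W.CoordinateRing ≃ₐ[K[X]] W.CoordinateRing) (L : Type*)
    [CommRing L] [Algebra K L] : Set (W.CoordinateRing →ₐ[K] L) :=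
  {φ | ∀ f, φ f ^ q = φ (τ f)}

lemma poleOrder_sum_smul_poleMonomial_le {l : ℕ} (a : Fin l → K) :
    poleOrder (∑ y, a y • poleMonomial W y) ≤ (l + 1 : ℕ) := by
  refine (poleOrder_sum_le _ _).trans (Finset.sup_le fun y _ ↦ ?_)
  rcases eq_or_ne (a y) 0 with h | h
  · simp [h]
  · rw [poleOrder_smul h, poleOrder_poleMonomial]
    exact_mod_cast (by omega : (y : ℕ) + 2 ≤ l + 1)

lemma sum_smul_poleMonomial_ne_zero {l : ℕ} {a : Fin l → K} (ha : a ≠ 0) :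
    ∑ y, a y • poleMonomial W y ≠ 0 := by
  obtain ⟨y₀, hy₀⟩ := Function.ne_iff.1 ha
  refine sum_ne_zero_of_poleOrder_injOn ?_ (Finset.mem_univ y₀)
    (smul_ne_zero hy₀ (poleMonomial_ne_zero _))
  rintro y ⟨-, hy⟩ z ⟨-, hz⟩ h
  simp only [poleOrder_smul (left_ne_zero_of_smul hy), poleOrder_smul (left_ne_zero_of_smul hz),
    poleOrder_poleMonomial] at h
  exact Fin.ext (by exact_mod_cast add_right_cancel (Nat.cast_injective h))

/-- Bombieri's auxiliary function `∑ α x y • e y * e x ^ s'`, where `e n = poleMonomial W n`. -/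
noncomputable def auxFunction (W : WeierstrassCurve.Affine K) (s' : ℕ) {k l : ℕ}
    (α : Fin k → Fin l → K) : W.CoordinateRing :=
  ∑ x, (∑ y, α x y • poleMonomial W y) * poleMonomial W x ^ s'

lemma poleOrder_auxFunction_le (s' : ℕ) {k l : ℕ} (α : Fin k → Fin l → K) :
    poleOrder (auxFunction W s' α) ≤ (l + 1 + s' * (k + 1) : ℕ) := by
  refine (poleOrder_sum_le _ _).trans (Finset.sup_le fun x _ ↦ ?_)
  rw [poleOrder_mul, poleOrder_pow, poleOrder_poleMonomial, nsmul_eq_mul, Nat.cast_add (l + 1)]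
  refine add_le_add (poleOrder_sum_smul_poleMonomial_le (α x)) ?_
  exact_mod_cast Nat.mul_le_mul_left s' (by omega : (x : ℕ) + 2 ≤ k + 1)

-- The inner sums have pole orders smaller than `s'`, so that of the `x`-th term determines `x`.
lemma auxFunction_ne_zero {s' k l : ℕ} (hl : l + 1 < s') {α : Fin k → Fin l → K} (hα : α ≠ 0) :
    auxFunction W s' α ≠ 0 := by
  obtain ⟨x₀, hx₀⟩ := Function.ne_iff.1 hα
  refine sum_ne_zero_of_poleOrder_injOn ?_ (Finset.mem_univ x₀)
    (mul_ne_zero (sum_smul_poleMonomial_ne_zero hx₀) (pow_ne_zero _ (poleMonomial_ne_zero _)))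
  have hterm (x : Fin k)
      (hx : (∑ y, α x y • poleMonomial W y) * poleMonomial W x ^ s' ≠ 0) :
      ∃ u < s', poleOrder ((∑ y, α x y • poleMonomial W y) * poleMonomial W x ^ s') =
        (u + s' * (x + 2) : ℕ) := by
    obtain ⟨u, hu⟩ := WithBot.ne_bot_iff_exists.1 (poleOrder_eq_bot.not.2 (left_ne_zero_of_mul hx))
    have hu_le : u ≤ l + 1 :=
      WithBot.coe_le_coe.1 (hu.trans_le (poleOrder_sum_smul_poleMonomial_le (α x)))
    refine ⟨u, by omega, ?_⟩
    rw [poleOrder_mul, poleOrder_pow, poleOrder_poleMonomial, ← hu, nsmul_eq_mul]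
    norm_cast
  rintro x ⟨-, hx⟩ z ⟨-, hz⟩ h
  obtain ⟨u, hu, hxu⟩ := hterm x hx
  obtain ⟨v, hv, hzv⟩ := hterm z hz
  have huv : u + s' * (x + 2) = v + s' * (z + 2) := by
    simp only [hxu, hzv] at h
    exact_mod_cast h
  have hdiv := congrArg (· / s') huv
  simp only [Nat.add_mul_div_left _ _ (by omega : 0 < s'), Nat.div_eq_of_lt hu,
    Nat.div_eq_of_lt hv] at hdiv
  exact Fin.ext (by omega)

lemma exists_poleMonomial_relation (τ : W.CoordinateRing ≃ₐ[K[X]] W.CoordinateRing) {s k l : ℕ}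
    (h : s * (l + 1) + (k + 1) + 1 < k * l) :
    ∃ β : Fin k → Fin l → K, β ≠ 0 ∧
      ∑ x, ∑ y, β x y • (τ (poleMonomial W x) * poleMonomial W y ^ s) = 0 := by
  let v (z : Fin k × Fin l) : poleSpace W (s * (l + 1) + (k + 1)) :=
    ⟨τ (poleMonomial W z.1) * poleMonomial W z.2 ^ s, by
      rw [mem_poleSpace, poleOrder_mul, poleOrder_algEquiv, poleOrder_pow, poleOrder_poleMonomial,
        poleOrder_poleMonomial, nsmul_eq_mul]
      have := Nat.mul_le_mul_left s (by omega : (z.2 : ℕ) + 2 ≤ l + 1)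
      exact_mod_cast (by omega : (z.1 : ℕ) + 2 + s * (z.2 + 2) ≤ s * (l + 1) + (k + 1))⟩
  have hv : ¬ LinearIndependent K v := fun hli ↦ by
    have hcard := hli.fintype_card_le_finrank.trans (finrank_poleSpace_le _)
    simp only [Fintype.card_prod, Fintype.card_fin] at hcard
    omega
  obtain ⟨β, hβ, ⟨x, y⟩, hxy⟩ := Fintype.not_linearIndependent_iff.1 hv
  refine ⟨fun x y ↦ β (x, y), fun h0 ↦ hxy (congrFun₂ h0 x y), ?_⟩
  rw [← Fintype.sum_prod_type']
  simpa [v] using congrArg Subtype.val hβ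

/- Raising `auxFunction` to the power `s = p ^ i` turns its coefficients into `β` and, at a twisted
point, `e x ^ (s * s')` into `τ (e x)`, so that the relation satisfied by `β` applies. -/
lemma map_auxFunction_eq_zero [Fintype K] (p : ℕ) [Fact p.Prime] [CharP K p] {i s' : ℕ}
    (hcard : Fintype.card K = p ^ i * s') {τ : W.CoordinateRing ≃ₐ[K[X]] W.CoordinateRing}
    {k l : ℕ} {β : Fin k → Fin l → K}
    (hβ : ∑ x, ∑ y, β x y • (τ (poleMonomial W x) * poleMonomial W y ^ p ^ i) = 0)
    {L : Type*} [CommRing L] [IsDomain L] [Algebra K L] {φ : W.CoordinateRing →ₐ[K] L}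
    (hφ : φ ∈ twistedPoints (Fintype.card K) τ L) :
    φ (auxFunction W s' fun x y ↦ β x y ^ s') = 0 := by
  have : CharP W.CoordinateRing p :=
    charP_of_injective_algebraMap (algebraMap K W.CoordinateRing).injective p
  have hpow : auxFunction W s' (fun x y ↦ β x y ^ s') ^ p ^ i =
      ∑ x, ∑ y, β x y • (poleMonomial W x ^ Fintype.card K * poleMonomial W y ^ p ^ i) := by
    simp only [auxFunction, sum_pow_char_pow, mul_pow, _root_.smul_pow, Finset.sum_mul, ← pow_mul,
      mul_comm s', ← hcard, FiniteField.pow_card, smul_mul_assoc,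
      mul_comm (poleMonomial W _ ^ p ^ i)]
  refine eq_zero_of_pow_eq_zero (n := p ^ i) ?_
  rw [← map_pow, hpow, ← map_zero φ, ← hβ]
  simp only [map_sum, map_smul, map_mul, map_pow, hφ _]

theorem finite_and_ncard_twistedPoints_le [Fintype K] (p : ℕ) [Fact p.Prime] [CharP K p]
    {i s' : ℕ} (hcard : Fintype.card K = p ^ i * s') (hi : 12 ≤ p ^ i) (his' : p ^ i ≤ s')
    (τ : W.CoordinateRing ≃ₐ[K[X]] W.CoordinateRing) (L : Type*) [CommRing L] [IsDomain L]
    [Algebra K L] :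
    (twistedPoints (Fintype.card K) τ L).Finite ∧
      (twistedPoints (Fintype.card K) τ L).ncard ≤ Fintype.card K + p ^ i + 4 * s' := by
  obtain ⟨r, hr⟩ : ∃ r, p ^ i = r + 2 := ⟨p ^ i - 2, by omega⟩
  obtain ⟨β, hβ0, hβ⟩ := exists_poleMonomial_relation τ (s := p ^ i) (k := p ^ i + 3) (l := r)
    (by rw [hr]; nlinarith)
  have hG : auxFunction W s' (fun x y ↦ β x y ^ s') ≠ 0 := by
    refine auxFunction_ne_zero (by omega) fun h ↦ hβ0 ?_
    ext x y
    exact eq_zero_of_pow_eq_zero (congrFun₂ h x y)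
  have hD : poleOrder (auxFunction W s' fun x y ↦ β x y ^ s') ≤
      (Fintype.card K + p ^ i + 4 * s' : ℕ) := by
    refine (poleOrder_auxFunction_le _ _).trans (Nat.cast_le.2 ?_)
    rw [hcard, hr]
    nlinarith
  have hsub := fun φ (hφ : φ ∈ twistedPoints (Fintype.card K) τ L) ↦
    map_auxFunction_eq_zero p hcard hβ hφ
  obtain ⟨hfin, hle⟩ := finite_and_ncard_zeros_le (L := L) hG hD
  exact ⟨hfin.subset hsub, (Set.ncard_le_ncard hsub hfin).trans hle⟩

lemma finite_and_ncard_twistedPoints_le_two_mul [Fintype K]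
    (τ : W.CoordinateRing ≃ₐ[K[X]] W.CoordinateRing) (L : Type*) [CommRing L] [IsDomain L]
    [Algebra K L] :
    (twistedPoints (Fintype.card K) τ L).Finite ∧
      (twistedPoints (Fintype.card K) τ L).ncard ≤ 2 * Fintype.card K := by
  have hP := FiniteField.X_pow_card_sub_X_ne_zero K (Fintype.one_lt_card (α := K))
  let G : W.CoordinateRing := algebraMap K[X] _ (X ^ Fintype.card K - X)
  have hG : G ≠ 0 := (map_ne_zero_iff _ (FaithfulSMul.algebraMap_injective _ _)).2 hP
  have hD : poleOrder G ≤ (2 * Fintype.card K : ℕ) := by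
    rw [poleOrder, Algebra.norm_algebraMap_of_basis (CoordinateRing.basis W), degree_pow,
      degree_eq_natDegree hP, FiniteField.X_pow_card_sub_X_natDegree_eq K Fintype.one_lt_card]
    simp
  have hsub : twistedPoints (Fintype.card K) τ L ⊆ {φ | φ G = 0} := fun φ hφ ↦ by
    have hX := hφ (algebraMap K[X] _ X)
    rw [τ.commutes, ← map_pow, ← map_pow] at hX
    simp only [Set.mem_ofPred_eq, G, map_sub, hX, sub_self]
  obtain ⟨hfin, hle⟩ := finite_and_ncard_zeros_le (L := L) hG hD
  exact ⟨hfin.subset hsub, (Set.ncard_le_ncard hsub hfin).trans hle⟩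

variable (K) in
lemma exists_card_eq_pow_mul [Fintype K] (p : ℕ) [Fact p.Prime] [CharP K p] :
    ∃ i s', Fintype.card K = p ^ i * s' ∧ p ^ i ≤ s' ∧ s' ≤ p * p ^ i := by
  have hp : 0 < p := (Fact.out : p.Prime).pos
  obtain ⟨m, -, hm⟩ := FiniteField.card K p
  refine ⟨m / 2, p ^ (m - m / 2 : ℕ), ?_, Nat.pow_le_pow_right hp (by omega), ?_⟩
  · rw [hm, ← pow_add, Nat.add_sub_of_le (Nat.div_le_self _ _)]
  · rw [← pow_succ']
    exact Nat.pow_le_pow_right hp (by omega)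

theorem finite_and_ncard_twistedPoints_le_sqrt [Fintype K] (p : ℕ) [Fact p.Prime] [CharP K p]
    (τ : W.CoordinateRing ≃ₐ[K[X]] W.CoordinateRing) (L : Type*) [CommRing L] [IsDomain L]
    [Algebra K L] :
    (twistedPoints (Fintype.card K) τ L).Finite ∧
      ((twistedPoints (Fintype.card K) τ L).ncard : ℝ) ≤
        Fintype.card K + 12 * p * √(Fintype.card K) := by
  have hp : (1 : ℝ) ≤ p := by exact_mod_cast (Fact.out : p.Prime).one_le
  obtain ⟨i, s', hcard, his', hs'⟩ := exists_card_eq_pow_mul K p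
  have hlow : ((p ^ i : ℕ) : ℝ) ≤ √(Fintype.card K) := by
    refine Real.le_sqrt_of_sq_le ?_
    rw [hcard, sq]
    exact_mod_cast Nat.mul_le_mul_left _ his'
  replace hs' : (s' : ℝ) ≤ p * (p ^ i : ℕ) := by exact_mod_cast hs'
  rcases le_or_gt 12 (p ^ i) with h12 | h12
  · obtain ⟨hfin, hle⟩ := finite_and_ncard_twistedPoints_le p hcard h12 his' τ L
    refine ⟨hfin, (Nat.cast_le.2 hle).trans ?_⟩
    have hlow_mul := mul_le_mul_of_nonneg_left hlow (Nat.cast_nonneg (α := ℝ) p)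
    have hsqrt : √(Fintype.card K : ℝ) ≤ p * √(Fintype.card K) :=
      le_mul_of_one_le_left (Real.sqrt_nonneg _) hp
    rw [Nat.cast_add, Nat.cast_add, Nat.cast_mul, Nat.cast_ofNat]
    linarith
  · obtain ⟨hfin, hle⟩ := finite_and_ncard_twistedPoints_le_two_mul τ L
    refine ⟨hfin, (Nat.cast_le.2 hle).trans ?_⟩
    have hq : (Fintype.card K : ℝ) ≤ (12 * p) ^ 2 := by
      have h12' : ((p ^ i : ℕ) : ℝ) ≤ 12 := by exact_mod_cast h12.le
      rw [hcard, Nat.cast_mul]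
      nlinarith
    have hsqrt : √(Fintype.card K : ℝ) ≤ 12 * p := Real.sqrt_le_iff.2 ⟨by positivity, hq⟩
    have hsq := Real.mul_self_sqrt (Nat.cast_nonneg (α := ℝ) (Fintype.card K))
    have hle_mul := mul_le_mul_of_nonneg_right hsqrt (Real.sqrt_nonneg (Fintype.card K))
    rw [Nat.cast_mul, Nat.cast_ofNat]
    linarith

end Stepanov

section FiniteFieldRoots

lemma exists_root_of_natDegree_dvd_finrank {F K : Type*} [Field F] [Finite F] [Field K]
    [Algebra F K] [Module.Finite F K] {f : F[X]} (hf : Irreducible f)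
    (hdvd : f.natDegree ∣ Module.finrank F K) : ∃ x : K, aeval x f = 0 := by
  have : Fact (Irreducible f) := ⟨hf⟩
  have : Module.Finite F (AdjoinRoot f) := (AdjoinRoot.powerBasis hf.ne_zero).finite
  have hfin : Module.finrank F (AdjoinRoot f) = f.natDegree := by
    rw [(AdjoinRoot.powerBasis hf.ne_zero).finrank, AdjoinRoot.powerBasis_dim]
  have : Finite (AdjoinRoot f) := Module.finite_of_finite F
  have : Finite K := Module.finite_of_finite F
  obtain ⟨φ⟩ := FiniteField.nonempty_algHom_of_finrank_dvd (hfin.symm ▸ hdvd)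
  exact ⟨φ (AdjoinRoot.root f), by
    rw [aeval_algHom_apply, AdjoinRoot.aeval_eq, AdjoinRoot.mk_self, map_zero]⟩

lemma exists_root_of_natDegree_eq_two {F K : Type*} [Field F] [Finite F] [Field K] [Algebra F K]
    (hK : Module.finrank F K = 2) {f : F[X]} (hf : f.natDegree = 2) : ∃ x : K, aeval x f = 0 := by
  have : Module.Finite F K := Module.finite_of_finrank_eq_succ hK
  by_cases hirr : Irreducible f
  · exact exists_root_of_natDegree_dvd_finrank hirr (by rw [hf, hK])
  · obtain ⟨x, hx⟩ : ∃ x, x ∈ f.roots := Multiset.exists_mem_of_ne_zero fun h0 ↦ hirr <|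
      (irreducible_iff_roots_eq_zero_of_degree_le_three hf.ge (by omega)).2 h0
    exact ⟨algebraMap F K x, by
      rw [aeval_algebraMap_apply, coe_aeval_eq_eval, isRoot_of_mem_roots hx, map_zero]⟩

lemma mem_range_algebraMap_of_pow_card_eq {K L : Type*} [Field K] [Fintype K] [CommRing L]
    [IsDomain L] [Algebra K L] {y : L} (hy : y ^ Fintype.card K = y) :
    y ∈ Set.range (algebraMap K L) := by
  have hsplit : (X ^ Fintype.card K - X : K[X]).Splits := by
    simpa using IsSplittingField.splits K (X ^ Fintype.card K - X : K[X])
  exact hsplit.mem_range_of_isRoot (FiniteField.X_pow_card_sub_X_ne_zero K Fintype.one_lt_card)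
    (by simp [hy])

end FiniteFieldRoots

section HasseBound

open WeierstrassCurve.Affine WeierstrassCurve.Affine.CoordinateRing

variable {K : Type*} [Field K] {W : WeierstrassCurve.Affine K}

section Points

variable {A : Type*} [CommRing A] [Algebra K A]

lemma coordinateRing_algHom_ext {φ ψ : W.CoordinateRing →ₐ[K] A}
    (hx : φ (mk W (C X)) = ψ (mk W (C X))) (hy : φ (mk W X) = ψ (mk W X)) : φ = ψ :=
  AdjoinRoot.algHom_ext' (Polynomial.algHom_ext hx) hy

lemma equation_baseChange_iff {x y : A} :
    (W⁄A).Equation x y ↔ W.polynomial.eval₂ (aeval (R := K) x : K[X] →ₐ[K] A) y = 0 := by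
  have hpoly : (W⁄A).polynomial = W.polynomial.map (mapRingHom (algebraMap K A)) :=
    map_polynomial ..
  rw [WeierstrassCurve.Affine.Equation, hpoly, ← eval₂_eval₂RingHom_apply]
  rfl

lemma exists_algHom_of_equation {x y : A} (h : (W⁄A).Equation x y) :
    ∃ φ : W.CoordinateRing →ₐ[K] A, φ (mk W (C X)) = x ∧ φ (mk W X) = y := by
  have hroot := equation_baseChange_iff.1 h
  exact ⟨AdjoinRoot.liftAlgHom W.polynomial (aeval x) y hroot,
    (AdjoinRoot.liftAlgHom_of ..).trans (aeval_X x), AdjoinRoot.liftAlgHom_root ..⟩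

lemma mem_twistedPoints_iff [Fintype K] {τ : W.CoordinateRing ≃ₐ[K[X]] W.CoordinateRing}
    {φ : W.CoordinateRing →ₐ[K] A} :
    φ ∈ twistedPoints (Fintype.card K) τ A ↔
      φ (mk W (C X)) ^ Fintype.card K = φ (mk W (C X)) ∧
        φ (mk W X) ^ Fintype.card K = φ (τ (mk W X)) := by
  have hX : τ (mk W (C X)) = mk W (C X) := τ.commutes X
  refine ⟨fun h ↦ ⟨by rw [h, hX], h _⟩, fun ⟨hx, hy⟩ f ↦ ?_⟩
  have hφ : (FiniteField.frobeniusAlgHom K A).comp φ =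
      φ.comp (τ.toAlgHom.restrictScalars K) :=
    coordinateRing_algHom_ext (hx.trans (congrArg φ hX).symm) hy
  exact DFunLike.congr_fun hφ f

end Points

lemma aeval_mk_negPolynomial : aeval (mk W W.negPolynomial) W.polynomial = 0 := by
  have hcomp : W.polynomial.comp W.negPolynomial = W.polynomial := by
    simp only [WeierstrassCurve.Affine.polynomial, negPolynomial, add_comp, sub_comp, mul_comp,
      pow_comp, X_comp, C_comp]
    ring
  calc aeval (mk W W.negPolynomial) W.polynomial
      = mk W (W.polynomial.comp W.negPolynomial) := by rw [aeval_def, comp, hom_eval₂]; rfl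
    _ = 0 := by rw [hcomp]; exact AdjoinRoot.mk_self

variable (W) in
/-- The negation `(x, y) ↦ (x, -y - a₁x - a₃)` of a Weierstrass curve, acting on functions. -/
noncomputable def negAlgHom : W.CoordinateRing →ₐ[K[X]] W.CoordinateRing :=
  AdjoinRoot.liftAlgHom W.polynomial (Algebra.ofId _ _) (mk W W.negPolynomial)
    aeval_mk_negPolynomial

lemma negAlgHom_mk_X : negAlgHom W (mk W X) = mk W W.negPolynomial :=
  AdjoinRoot.liftAlgHom_root _ _ _ aeval_mk_negPolynomial

lemma negAlgHom_comp_negAlgHom : (negAlgHom W).comp (negAlgHom W) = AlgHom.id _ _ :=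
  AdjoinRoot.algHom_ext <| by
    have hC : negAlgHom W (mk W (C (C W.a₁ * X + C W.a₃))) = mk W (C (C W.a₁ * X + C W.a₃)) :=
      (negAlgHom W).commutes _
    calc negAlgHom W (negAlgHom W (mk W X)) = mk W X := by
          rw [negAlgHom_mk_X, negPolynomial, map_sub, map_sub, map_neg, map_neg, hC,
            negAlgHom_mk_X, negPolynomial, map_sub, map_neg]
          ring

variable (W) in
/-- The negation of a Weierstrass curve as an automorphism over the `x`-line. -/
noncomputable def negAlgEquiv : W.CoordinateRing ≃ₐ[K[X]] W.CoordinateRing :=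
  .ofAlgHom _ _ (negAlgHom_comp_negAlgHom (W := W)) negAlgHom_comp_negAlgHom

lemma algHom_negAlgEquiv_mk_X {A : Type*} [CommRing A] [Algebra K A]
    (φ : W.CoordinateRing →ₐ[K] A) :
    φ (negAlgEquiv W (mk W X)) =
      (W⁄A).negY (φ (mk W (C X))) (φ (mk W X)) := by
  have hC (c : K) : φ (mk W (C (C c))) = algebraMap K A c := φ.commutes c
  calc φ (negAlgEquiv W (mk W X)) = φ (mk W W.negPolynomial) := congrArg φ negAlgHom_mk_X
    _ = _ := by
      simp only [negPolynomial, map_sub, map_neg, map_add, map_mul, hC, negY,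
        WeierstrassCurve.Affine.baseChange, WeierstrassCurve.baseChange, WeierstrassCurve.map_a₁,
        WeierstrassCurve.map_a₃]
      ring

section Bounds

variable [Fintype K] (p : ℕ) [Fact p.Prime] [CharP K p] {L : Type*} [Field L] [Algebra K L]

lemma ncard_le_of_exists_twistedPoint (τ : W.CoordinateRing ≃ₐ[K[X]] W.CoordinateRing)
    {S : Set (K × L)} (hS : ∀ P ∈ S, ∃ φ ∈ twistedPoints (Fintype.card K) τ L,
      φ (mk W (C X)) = algebraMap K L P.1 ∧ φ (mk W X) = P.2) :
    (S.ncard : ℝ) ≤ Fintype.card K + 12 * p * √(Fintype.card K) := by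
  obtain ⟨hfin, hle⟩ := finite_and_ncard_twistedPoints_le_sqrt p τ L
  have hsub : Prod.map (algebraMap K L) id '' S ⊆
      (fun φ ↦ (φ (mk W (C X)), φ (mk W X))) '' twistedPoints (Fintype.card K) τ L := by
    rintro _ ⟨P, hP, rfl⟩
    obtain ⟨φ, hφ, hx, hy⟩ := hS P hP
    exact ⟨φ, hφ, Prod.ext hx hy⟩
  refine le_trans (Nat.cast_le.2 ?_) hle
  calc S.ncard = (Prod.map (algebraMap K L) id '' S).ncard :=
        (Set.ncard_image_of_injective S
          ((algebraMap K L).injective.prodMap Function.injective_id)).symm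
    _ ≤ _ := Set.ncard_le_ncard hsub (hfin.image _)
    _ ≤ _ := Set.ncard_image_le hfin

variable (W) in
lemma ncard_equation_le :
    ({P : K × K | W.Equation P.1 P.2}.ncard : ℝ) ≤
      Fintype.card K + 12 * p * √(Fintype.card K) := by
  refine ncard_le_of_exists_twistedPoint (W := W) p .refl fun P hP ↦ ?_
  obtain ⟨φ, hx, hy⟩ := exists_algHom_of_equation (A := K) (Equation.map (RingHom.id K) hP)
  exact ⟨φ, fun f ↦ FiniteField.pow_card _, hx, hy⟩

variable (W L) in
lemma ncard_pow_card_eq_negY_le :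
    ({P : K × L | (W⁄L).Equation (algebraMap K L P.1) P.2 ∧
      P.2 ^ Fintype.card K =
        (W⁄L).negY (algebraMap K L P.1) P.2}.ncard : ℝ) ≤
      Fintype.card K + 12 * p * √(Fintype.card K) := by
  refine ncard_le_of_exists_twistedPoint p (negAlgEquiv W) fun P ⟨heq, hneg⟩ ↦ ?_
  obtain ⟨φ, hx, hy⟩ := exists_algHom_of_equation heq
  refine ⟨φ, mem_twistedPoints_iff.2 ⟨?_, ?_⟩, hx, hy⟩
  · rw [hx, ← map_pow, FiniteField.pow_card]
  · rw [algHom_negAlgEquiv_mk_X, hx, hy, hneg]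

end Bounds

lemma exists_equation_of_finrank_eq_two [Finite K] {L : Type*} [Field L] [Algebra K L]
    (hL : Module.finrank K L = 2) (x : K) :
    ∃ y : L, (W⁄L).Equation (algebraMap K L x) y := by
  have hdeg : (W.polynomial.map (evalRingHom x)).natDegree = 2 := by
    rw [monic_polynomial.natDegree_map, natDegree_polynomial]
  obtain ⟨y, hy⟩ := exists_root_of_natDegree_eq_two hL hdeg
  have heval : (aeval (algebraMap K L x) : K[X] →ₐ[K] L) =
      (algebraMap K L).comp (evalRingHom x) := by
    ext <;> simp
  exact ⟨y, by rwa [equation_baseChange_iff, heval, ← eval₂_map, ← aeval_def]⟩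

/- The fibre over `x` consists of two conjugate points. Frobenius fixes both or swaps them, and in
the ramified case it does both at once. -/
lemma two_le_ncard_add_ncard [Fintype K] {L : Type*} [Field L] [Algebra K L]
    (hL : Module.finrank K L = 2) (x : K) :
    2 ≤ {y | W.Equation x y}.ncard +
      {y : L | (W⁄L).Equation (algebraMap K L x) y ∧
        y ^ Fintype.card K = (W⁄L).negY (algebraMap K L x) y}.ncard := by
  have : Module.Finite K L := Module.finite_of_finrank_eq_succ hL
  have : Finite L := Module.finite_of_finite K
  set B := {y : L | (W⁄L).Equation (algebraMap K L x) y ∧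
    y ^ Fintype.card K = (W⁄L).negY (algebraMap K L x) y}
  obtain ⟨y, hy⟩ := exists_equation_of_finrank_eq_two (W := W) hL x
  by_cases hfix : y ^ Fintype.card K = y
  · obtain ⟨y, rfl⟩ := mem_range_algebraMap_of_pow_card_eq hfix
    replace hy : W.Equation x y := (map_equation _ (algebraMap K L).injective ..).1 hy
    by_cases hram : y = W.negY x y
    · have hA : 0 < {y | W.Equation x y}.ncard := (Set.ncard_pos (Set.toFinite _)).2 ⟨y, hy⟩
      have hB : 0 < B.ncard := (Set.ncard_pos (Set.toFinite _)).2 ⟨algebraMap K L y, hy.map _,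
        hfix.trans ((congrArg _ hram).trans (map_negY ..).symm)⟩
      omega
    · have hsub : {y, W.negY x y} ⊆ {y | W.Equation x y} :=
        Set.pair_subset hy ((equation_neg ..).2 hy)
      have := Set.ncard_le_ncard hsub
      rw [Set.ncard_pair hram] at this
      omega
  · have hfrob : (W⁄L).Equation (algebraMap K L x) (y ^ Fintype.card K) := by
      simpa [← map_pow, FiniteField.pow_card] using hy.baseChange (FiniteField.frobeniusAlgHom K L)
    have hneg := (Y_eq_of_X_eq hfrob hy rfl).resolve_left hfix
    have hneg' : (W⁄L).negY (algebraMap K L x) y ^ Fintype.card K =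
        (W⁄L).negY (algebraMap K L x) ((W⁄L).negY (algebraMap K L x) y) :=
      calc _ = (W⁄L).negY (algebraMap K L x ^ Fintype.card K) (y ^ Fintype.card K) :=
            (baseChange_negY (FiniteField.frobeniusAlgHom K L) ..).symm
        _ = _ := by rw [← map_pow, FiniteField.pow_card, hneg]
    have hsub : {y, (W⁄L).negY (algebraMap K L x) y} ⊆ B :=
      Set.pair_subset ⟨hy, hneg⟩ ⟨(equation_neg ..).2 hy, hneg'⟩
    have := Set.ncard_le_ncard hsub
    rw [Set.ncard_pair (by rwa [← hneg, ne_comm])] at this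
    omega

variable (W) in
theorem abs_ncard_equation_sub_card_le [Fintype K] (p : ℕ) [Fact p.Prime] [CharP K p] :
    |({P : K × K | W.Equation P.1 P.2}.ncard : ℝ) - Fintype.card K| ≤
      12 * p * √(Fintype.card K) := by
  let L := FiniteField.Extension K p 2
  have hsum : 2 * Fintype.card K ≤ {P : K × K | W.Equation P.1 P.2}.ncard +
      {P : K × L | (W⁄L).Equation (algebraMap K L P.1) P.2 ∧
        P.2 ^ Fintype.card K = (W⁄L).negY (algebraMap K L P.1) P.2}.ncard := by
    rw [ncard_setOf_prod W.Equation, ncard_setOf_prod fun x (y : L) ↦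
        (W⁄L).Equation (algebraMap K L x) y ∧
          y ^ Fintype.card K = (W⁄L).negY (algebraMap K L x) y,
      ← Finset.sum_add_distrib, mul_comm, ← smul_eq_mul, ← Finset.card_univ]
    exact Finset.card_nsmul_le_sum _ _ _ fun x _ ↦
      two_le_ncard_add_ncard (FiniteField.finrank_extension K p 2) x
  have hle := ncard_equation_le W p
  have hle' := ncard_pow_card_eq_negY_le W p L
  rify at hsum
  rw [abs_le]
  constructor <;> linarith

end HasseBound

section CubicFamily

variable {K : Type*} [Field K] {a d : K}

/-- The roots in `K` of the member `X³ + a X² + α X + d` of the one-parameter family of cubics in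
which `α` varies. -/
def cubicRoots (a d α : K) : Set K :=
  {u | u ^ 3 + a * u ^ 2 + α * u + d = 0}

/-- The parameter `α` for which `u ≠ 0` lies in `cubicRoots a d α`. -/
def cubicParam (a d u : K) : K :=
  -(u ^ 2 + a * u + d / u)

/-- The affine curve whose points with distinct coordinates are the pairs of distinct roots of a
common member of the family `X³ + a X² + α X + d`. -/
def rootPairs (a d : K) : Set (K × K) :=
  {P | P.1 * P.2 * (P.1 + P.2 + a) = d}

lemma mem_cubicRoots {α u : K} : u ∈ cubicRoots a d α ↔ u ^ 3 + a * u ^ 2 + α * u + d = 0 :=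
  Iff.rfl

lemma mem_rootPairs {u v : K} : (u, v) ∈ rootPairs a d ↔ u * v * (u + v + a) = d :=
  Iff.rfl

lemma cubicRoots_eq_fiber (hd : d ≠ 0) (α : K) :
    cubicRoots a d α = {u ∈ ({0}ᶜ : Set K) | cubicParam a d u = α} := by
  ext u
  rw [mem_cubicRoots, Set.mem_ofPred_eq, Set.mem_compl_singleton_iff, cubicParam]
  rcases eq_or_ne u 0 with rfl | hu
  · simp [hd]
  · field_simp
    grind

lemma mem_rootPairs_iff_cubicParam_eq (hd : d ≠ 0) {u v : K} (huv : u ≠ v) :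
    (u, v) ∈ rootPairs a d ↔ (u ≠ 0 ∧ v ≠ 0) ∧ cubicParam a d u = cubicParam a d v := by
  rw [mem_rootPairs, cubicParam, cubicParam]
  by_cases h : u ≠ 0 ∧ v ≠ 0
  · obtain ⟨hu, hv⟩ := h
    have huv' := sub_ne_zero.2 huv
    field_simp
    grind
  · grind

lemma ncard_setOf_cubic_eq_zero_le (a b c : K) (hd : d ≠ 0) :
    {u | a * u ^ 3 + b * u ^ 2 + c * u + d = 0}.ncard ≤ 3 := by
  classical
  calc {u | a * u ^ 3 + b * u ^ 2 + c * u + d = 0}.ncard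
      = ((Cubic.mk a b c d).roots.toFinset : Set K).ncard := by
        congr 1
        ext u
        simp [Cubic.mem_roots_iff (P := ⟨a, b, c, d⟩) (Cubic.ne_zero_of_d_ne_zero hd)]
    _ ≤ 3 := (Set.ncard_coe_finset _).trans_le Cubic.card_roots_le

lemma ncard_diag_rootPairs_le (hd : d ≠ 0) : {u | (u, u) ∈ rootPairs a d}.ncard ≤ 3 := by
  convert ncard_setOf_cubic_eq_zero_le 2 a 0 (neg_ne_zero.2 hd) using 4 with u
  rw [mem_rootPairs]
  grind

lemma fst_ne_zero_of_mem_rootPairs (hd : d ≠ 0) {P : K × K} (hP : P ∈ rootPairs a d) :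
    P.1 ≠ 0 := by
  rintro h
  simp [rootPairs, h, hd.symm] at hP

lemma injOn_rootPairs (hd : d ≠ 0) :
    Set.InjOn (fun P : K × K ↦ (d / P.1, d * P.2 / P.1)) (rootPairs a d) := by
  rintro ⟨u, v⟩ hP ⟨u', v'⟩ hP' h
  have := fst_ne_zero_of_mem_rootPairs hd hP
  have := fst_ne_zero_of_mem_rootPairs hd hP'
  simp only [Prod.mk.injEq] at h ⊢
  field_simp at *
  grind

lemma setOf_equation_eq_image_rootPairs_union (hd : d ≠ 0) :
    {P : K × K | WeierstrassCurve.Affine.Equation ⟨a, 0, d, 0, 0⟩ P.1 P.2} =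
      (fun P : K × K ↦ (d / P.1, d * P.2 / P.1)) '' rootPairs a d ∪ {(0, 0), (0, -d)} := by
  ext ⟨x, y⟩
  simp only [Set.mem_ofPred_eq, WeierstrassCurve.Affine.equation_iff, Set.mem_union,
    Set.mem_image, Set.mem_insert_iff, Set.mem_singleton_iff, Prod.mk.injEq]
  constructor
  · intro h
    rcases eq_or_ne x 0 with rfl | hx
    · grind
    · left
      refine ⟨(d / x, y / x), ?_, ?_⟩
      · rw [mem_rootPairs]
        field_simp
        grind
      · field_simp
        trivial
  · rintro (⟨⟨u, v⟩, hP, rfl, rfl⟩ | hxy)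
    · have := fst_ne_zero_of_mem_rootPairs hd hP
      rw [mem_rootPairs] at hP
      field_simp at *
      grind
    · grind

variable [Finite K]

-- If `u ≠ v` are the only roots, then the third root `-(u + v + a)` repeats one of them.
lemma ncard_setOf_ncard_cubicRoots_eq_two_le (hd : d ≠ 0) :
    {α | (cubicRoots a d α).ncard = 2}.ncard ≤ {u | (u, u) ∈ rootPairs a d}.ncard := by
  refine (Set.ncard_le_ncard ?_).trans (Set.ncard_image_le (f := cubicParam a d) (Set.toFinite _))
  intro α hα
  obtain ⟨u, v, huv, hroots⟩ := Set.ncard_eq_two.1 hα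
  have hmem (w : K) : w ^ 3 + a * w ^ 2 + α * w + d = 0 ↔ w = u ∨ w = v :=
    Set.ext_iff.1 hroots w
  have hu := (hmem u).2 (.inl rfl)
  have hv := (hmem v).2 (.inr rfl)
  have hthird : -(u + v + a) = u ∨ -(u + v + a) = v := (hmem _).1 (by grind)
  have hprod : u * v * (u + v + a) = d := by grind
  rw [← mem_cubicRoots, cubicRoots_eq_fiber hd] at hu hv
  rcases hthird with h | h
  · exact ⟨u, mem_rootPairs.2 (by grind), hu.2⟩
  · exact ⟨v, mem_rootPairs.2 (by grind), hv.2⟩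

lemma sum_ncard_cubicRoots [Fintype K] (hd : d ≠ 0) :
    ∑ α, (cubicRoots a d α).ncard + 1 = Fintype.card K := by
  simp only [cubicRoots_eq_fiber hd]
  rw [sum_ncard_fiber _ (by simp), ← Set.ncard_singleton (0 : K), add_comm,
    Set.ncard_add_ncard_compl, Nat.card_eq_fintype_card]

lemma sum_sq_ncard_cubicRoots [Fintype K] (hd : d ≠ 0) :
    ∑ α, (cubicRoots a d α).ncard ^ 2 + 1 =
      Fintype.card K + {P ∈ rootPairs a d | P.1 ≠ P.2}.ncard := by
  rw [← sum_ncard_cubicRoots (a := a) hd]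
  simp only [cubicRoots_eq_fiber hd]
  rw [sum_sq_ncard_fiber, sum_ncard_fiber _ (by simp), ← ncard_diag_add_ncard_offDiag,
    add_right_comm]
  congr 3
  · ext u
    simp
  · ext ⟨u, v⟩
    exact and_congr_left fun huv ↦ (mem_rootPairs_iff_cubicParam_eq hd huv).symm

-- Sum the identity `3 [r = 0] + 4 r = 3 + r² + [r = 2]`, valid for `r ≤ 3`, over all `α`.
lemma three_mul_ncard_cubicRoots_eq_empty (hd : d ≠ 0) :
    3 * {α | cubicRoots a d α = ∅}.ncard =
      3 + {P ∈ rootPairs a d | P.1 ≠ P.2}.ncard + {α | (cubicRoots a d α).ncard = 2}.ncard := by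
  classical
  have := Fintype.ofFinite K
  let r : K → ℕ := fun α ↦ (cubicRoots a d α).ncard
  have hcard (k : ℕ) : {α | r α = k}.ncard = ∑ α, if r α = k then 1 else 0 := by
    simp [Set.ncard_eq_toFinset_card']
  have hempty : {α | cubicRoots a d α = ∅} = {α | r α = 0} := by
    ext α
    exact (Set.ncard_eq_zero (Set.toFinite _)).symm
  have hpointwise (α : K) : 3 * (if r α = 0 then 1 else 0) + 4 * r α =
      3 + r α ^ 2 + if r α = 2 then 1 else 0 := by
    have hle : r α ≤ 3 := by
      simpa [r, cubicRoots] using ncard_setOf_cubic_eq_zero_le 1 a α hd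
    interval_cases r α <;> rfl
  have hsum := Finset.sum_congr rfl fun α (_ : α ∈ Finset.univ) ↦ hpointwise α
  simp only [Finset.sum_add_distrib, ← Finset.mul_sum, ← hcard, Finset.sum_const,
    Finset.card_univ, smul_eq_mul] at hsum
  have hsum₁ : ∑ α, r α + 1 = Fintype.card K := sum_ncard_cubicRoots hd
  have hsum₂ : ∑ α, r α ^ 2 + 1 = _ := sum_sq_ncard_cubicRoots hd
  change 3 * _ = _ + {α | r α = 2}.ncard
  rw [hempty]
  omega

lemma ncard_equation_eq_ncard_rootPairs_add_two (hd : d ≠ 0) :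
    {P : K × K | WeierstrassCurve.Affine.Equation ⟨a, 0, d, 0, 0⟩ P.1 P.2}.ncard =
      (rootPairs a d).ncard + 2 := by
  have hpair : ((0 : K), (0 : K)) ≠ (0, -d) := by simpa [eq_comm] using hd
  rw [setOf_equation_eq_image_rootPairs_union hd, Set.ncard_union_eq,
    (injOn_rootPairs hd).ncard_image, Set.ncard_pair hpair]
  rw [Set.disjoint_left]
  rintro _ ⟨P, hP, rfl⟩ h
  simp [fst_ne_zero_of_mem_rootPairs hd hP, hd] at h

lemma abs_three_mul_ncard_cubicRoots_eq_empty_sub_le [Fintype K] (p : ℕ) [Fact p.Prime] [CharP K p]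
    (hd : d ≠ 0) :
    |3 * ({α | cubicRoots a d α = ∅}.ncard : ℝ) - Fintype.card K| ≤
      12 * p * √(Fintype.card K) + 2 := by
  have hHasse := abs_ncard_equation_sub_card_le (⟨a, 0, d, 0, 0⟩ : WeierstrassCurve K) p
  have hempty := three_mul_ncard_cubicRoots_eq_empty (a := a) hd
  have hcurve := ncard_equation_eq_ncard_rootPairs_add_two (a := a) hd
  have hsplit := ncard_diag_add_ncard_offDiag (rootPairs a d)
  have hdiag := ncard_diag_rootPairs_le (a := a) hd
  have htwo := ncard_setOf_ncard_cubicRoots_eq_two_le (a := a) hd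
  rify at *
  rw [abs_le] at *
  constructor <;> linarith

end CubicFamily

section Capelli

open IntermediateField Module

variable {F K L : Type*} [Field F] [Field K] [Field L] [Algebra F K] [Algebra F L]

lemma irreducible_iff_natDegree_minpoly_eq {P : F[X]} (hP : P ≠ 0) {β : L} (hβ : aeval β P = 0) :
    Irreducible P ↔ (minpoly F β).natDegree = P.natDegree := by
  have hint : IsIntegral F β := IsAlgebraic.isIntegral ⟨P, hP, hβ⟩
  refine ⟨fun h ↦ ?_, fun h ↦ ?_⟩
  · rw [← minpoly.eq_of_irreducible h hβ, natDegree_mul_C (by simpa using hP)]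
  · exact (associated_of_dvd_of_natDegree_le (minpoly.dvd F β hβ) hP h.ge).irreducible
      (minpoly.irreducible hint)

lemma natDegree_minpoly_eq_finrank_mul [Algebra K L] [IsScalarTower F K L] {α : K}
    (hα : F⟮α⟯ = ⊤) {β : L} (hβ : IsIntegral F β) (hαβ : algebraMap K L α ∈ F⟮β⟯) :
    (minpoly F β).natDegree = finrank F K * (minpoly K β).natDegree := by
  have hK (x : K) : algebraMap K L x ∈ F⟮β⟯ := by
    have hle : F⟮α⟯ ≤ F⟮β⟯.comap (IsScalarTower.toAlgHom F K L) := adjoin_simple_le_iff.2 hαβ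
    rw [hα] at hle
    exact hle (mem_top (x := x))
  have hadjoin : K⟮β⟯.restrictScalars F = F⟮β⟯ := by
    refine le_antisymm ?_ (adjoin_simple_le_iff.2 (mem_adjoin_simple_self K β))
    have hle : K⟮β⟯ ≤ F⟮β⟯.toSubfield.toIntermediateField hK :=
      adjoin_simple_le_iff.2 (mem_adjoin_simple_self F β)
    exact hle
  calc (minpoly F β).natDegree = finrank F K⟮β⟯ := by
        rw [← adjoin.finrank hβ, ← hadjoin]
        rfl
    _ = finrank F K * (minpoly K β).natDegree := by
        rw [← adjoin.finrank hβ.tower_top, finrank_mul_finrank]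

lemma aeval_ratTransform (g h f : F[X]) {β : L} (hβ : aeval β h ≠ 0) :
    aeval β (ratTransform g h f) =
      aeval β h ^ f.natDegree * aeval (aeval β g / aeval β h) f := by
  rw [ratTransform, map_sum, aeval_eq_sum_range (p := f), Finset.mul_sum]
  refine Finset.sum_congr rfl fun i hi ↦ ?_
  have hpow : aeval β h ^ f.natDegree = aeval β h ^ i * aeval β h ^ (f.natDegree - i) := by
    rw [← pow_add, Nat.add_sub_of_le (Finset.mem_range_succ_iff.1 hi)]
  simp only [map_mul, map_pow, aeval_C, Algebra.smul_def, hpow, div_pow]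
  field_simp

lemma natDegree_ratTransform {g h : F[X]} (hgh : h.natDegree < g.natDegree) (f : F[X]) :
    (ratTransform g h f).natDegree = f.natDegree * g.natDegree := by
  set n := f.natDegree with hn
  rcases eq_or_ne f 0 with rfl | hf
  · simp [ratTransform, hn]
  have hg : g ≠ 0 := ne_zero_of_natDegree_gt hgh
  have htop : (C (f.coeff n) * g ^ n).degree = (n * g.natDegree : ℕ) := by
    rw [degree_C_mul (by simpa [hn] using hf), degree_pow, degree_eq_natDegree hg]
    simp
  refine natDegree_eq_of_degree_eq_some ?_
  rw [ratTransform, Finset.sum_range_succ, ← hn, Nat.sub_self, pow_zero, mul_one,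
    degree_add_eq_right_of_degree_lt, htop]
  rw [htop]
  refine (degree_sum_le _ _).trans_lt ((Finset.sup_lt_iff (WithBot.bot_lt_coe _)).2 fun i hi ↦ ?_)
  rw [Finset.mem_range] at hi
  refine degree_le_natDegree.trans_lt (Nat.cast_lt.2 ?_)
  calc (C (f.coeff i) * g ^ i * h ^ (n - i)).natDegree
      ≤ i * g.natDegree + (n - i) * h.natDegree :=
        natDegree_mul_le.trans (add_le_add ((natDegree_C_mul_le _ _).trans natDegree_pow_le)
          natDegree_pow_le)
    _ < i * g.natDegree + (n - i) * g.natDegree := by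
        gcongr
        omega
    _ = n * g.natDegree := by rw [← add_mul, Nat.add_sub_of_le hi.le]

-- A root `β` of `g - α h` generates `F(β) ⊇ F(α) = K`, and it is also a root of the transform of
-- `minpoly F α`; each polynomial is irreducible if and only if its degree is that of `β`.
lemma irreducible_ratTransform_minpoly_iff [Module.Finite F K] {g h : F[X]}
    (hgh : h.natDegree < g.natDegree) (hcop : IsCoprime g h) {α : K} (hα : F⟮α⟯ = ⊤) :
    Irreducible (ratTransform g h (minpoly F α)) ↔
      Irreducible (g.map (algebraMap F K) - C α * h.map (algebraMap F K)) := by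
  set p := g.map (algebraMap F K) - C α * h.map (algebraMap F K)
  have hdeg : p.natDegree = g.natDegree := by
    rw [natDegree_sub_eq_left_of_natDegree_lt, natDegree_map]
    refine (natDegree_C_mul_le _ _).trans_lt ?_
    rwa [natDegree_map, natDegree_map]
  have hp : p ≠ 0 := ne_zero_of_natDegree_gt (hdeg ▸ hgh)
  have hP := natDegree_ratTransform hgh (minpoly F α)
  rw [(Field.primitive_element_iff_minpoly_natDegree_eq F α).1 hα] at hP
  have hpos : 0 < finrank F K := finrank_pos
  obtain ⟨β, hβ⟩ := IsAlgClosed.exists_aeval_eq_zero (AlgebraicClosure K) p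
    (natDegree_pos_iff_degree_pos.1 (by omega)).ne'
  have hgβ : aeval β g = algebraMap K _ α * aeval β h := by
    simpa [p, sub_eq_zero] using hβ
  have hhβ : aeval β h ≠ 0 := by
    intro hhβ
    have := (hcop.map (aeval β).toRingHom).ne_zero_or_ne_zero
    simp [hgβ, hhβ] at this
  have hroot : aeval β (ratTransform g h (minpoly F α)) = 0 := by
    rw [aeval_ratTransform _ _ _ hhβ, hgβ, mul_div_cancel_right₀ _ hhβ, aeval_algebraMap_apply]
    simp
  have hαβ : algebraMap K (AlgebraicClosure K) α ∈ F⟮β⟯ := by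
    have haeval (f : F[X]) : aeval β f ∈ F⟮β⟯ :=
      algebra_adjoin_le_adjoin F {β} (aeval_mem_adjoin_singleton F β)
    rw [eq_div_of_mul_eq hhβ hgβ.symm]
    exact div_mem (haeval g) (haeval h)
  have hint : IsIntegral F β := isIntegral_trans β (IsAlgebraic.isIntegral ⟨p, hp, hβ⟩)
  rw [irreducible_iff_natDegree_minpoly_eq hp hβ, irreducible_iff_natDegree_minpoly_eq _ hroot,
    natDegree_minpoly_eq_finrank_mul hα hint hαβ, hdeg, hP, Nat.mul_right_inj hpos.ne']
  exact ne_zero_of_natDegree_gt (n := 0) (hP ▸ Nat.mul_pos hpos (by omega))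

end Capelli

section CubicOverLinear

variable {K : Type*} [Field K] {g h : K[X]}

lemma exists_comp_eq_of_natDegree_eq_one (hh : h.natDegree = 1) (g : K[X]) :
    ∃ P : K[X], P.comp h = g := by
  obtain ⟨s, hs, t, rfl⟩ := natDegree_eq_one.1 hh
  refine ⟨g.comp (C s⁻¹ * (X - C t)), ?_⟩
  rw [comp_assoc]
  simp [← mul_assoc, ← C_mul, hs]

lemma exists_cubic_in_linear (hg : g.natDegree = 3) (hh : h.natDegree = 1) (hgh : IsCoprime g h) :
    ∃ A a b d : K, A ≠ 0 ∧ d ≠ 0 ∧ g = C A * (h ^ 3 + C a * h ^ 2 + C b * h + C d) := by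
  obtain ⟨P, rfl⟩ := exists_comp_eq_of_natDegree_eq_one hh g
  rw [natDegree_comp, hh, mul_one] at hg
  have hP : P = C (P.coeff 0) + C (P.coeff 1) * X + C (P.coeff 2) * X ^ 2 +
      C (P.coeff 3) * X ^ 3 := by
    conv_lhs => rw [P.as_sum_range_C_mul_X_pow, hg]
    simp [Finset.sum_range_succ]
  have hA : P.coeff 3 ≠ 0 := by
    rw [← hg, coeff_natDegree]
    exact leadingCoeff_ne_zero.2 (ne_zero_of_natDegree_gt (n := 0) (by omega))
  have hcomp : P.comp h = C (P.coeff 3) * (h ^ 3 + C (P.coeff 2 / P.coeff 3) * h ^ 2 +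
      C (P.coeff 1 / P.coeff 3) * h + C (P.coeff 0 / P.coeff 3)) := by
    have hC (x : K) : C (P.coeff 3) * C (x / P.coeff 3) = C x := by
      rw [← C_mul, mul_div_cancel₀ _ hA]
    conv_lhs => rw [hP]
    simp only [add_comp, mul_comp, C_comp, X_comp, pow_comp]
    linear_combination - hC (P.coeff 0) - hC (P.coeff 1) * h - hC (P.coeff 2) * h ^ 2
  refine ⟨_, _, _, _, hA, fun hd ↦ ?_, hcomp⟩
  have hdvd : h ∣ P.comp h := by
    rw [hcomp, hd, map_zero, add_zero]
    exact .mul_left (dvd_add (dvd_add (dvd_pow_self h three_ne_zero)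
      (.mul_left (dvd_pow_self h two_ne_zero) _)) (dvd_mul_left h _)) _
  have := natDegree_eq_zero_of_isUnit (hgh.isUnit_of_dvd' hdvd dvd_rfl)
  omega

lemma eval_surjective_of_natDegree_eq_one (hh : h.natDegree = 1) : Function.Surjective h.eval := by
  obtain ⟨s, hs, t, rfl⟩ := natDegree_eq_one.1 hh
  exact fun u ↦ ⟨(u - t) / s, by simp [mul_div_cancel₀ _ hs]⟩

lemma irreducible_sub_C_mul_iff (hg : g.natDegree = 3) (hh : h.natDegree = 1) (α : K) :
    Irreducible (g - C α * h) ↔ ∀ x, g.eval x ≠ α * h.eval x := by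
  have hdeg : (g - C α * h).natDegree = 3 := by
    rw [natDegree_sub_eq_left_of_natDegree_lt, hg]
    exact (natDegree_C_mul_le _ _).trans_lt (by omega)
  rw [irreducible_iff_roots_eq_zero_of_degree_le_three (by omega) (by omega),
    Multiset.eq_zero_iff_forall_notMem]
  have hne : g - C α * h ≠ 0 := ne_zero_of_natDegree_gt (n := 0) (by omega)
  simp [hne, sub_eq_zero]

lemma abs_three_mul_ncard_irreducible_sub_le [Fintype K] (p : ℕ) [Fact p.Prime] [CharP K p]
    (hg : g.natDegree = 3) (hh : h.natDegree = 1) (hgh : IsCoprime g h) :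
    |3 * ({α | Irreducible (g - C α * h)}.ncard : ℝ) - Fintype.card K| ≤
      12 * p * √(Fintype.card K) + 2 := by
  obtain ⟨A, a, b, d, hA, hd, hgeq⟩ := exists_cubic_in_linear hg hh hgh
  have hiff (α : K) : Irreducible (g - C α * h) ↔ cubicRoots a d (b - α / A) = ∅ := by
    rw [irreducible_sub_C_mul_iff hg hh, Set.eq_empty_iff_forall_notMem,
      (eval_surjective_of_natDegree_eq_one hh).forall (p := (· ∉ cubicRoots a d (b - α / A)))]
    refine forall_congr' fun x ↦ not_congr ?_
    rw [mem_cubicRoots, hgeq]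
    simp only [eval_mul, eval_add, eval_pow, eval_C]
    field_simp
    grind
  have hcard : {α | Irreducible (g - C α * h)}.ncard = {α | cubicRoots a d α = ∅}.ncard := by
    simp only [hiff]
    refine Set.ncard_preimage_of_injective_subset_range (s := {α | cubicRoots a d α = ∅})
      (fun x y hxy ↦ ?_) fun x _ ↦ ⟨A * (b - x), ?_⟩
    · simpa [div_left_inj' hA] using hxy
    · field_simp
      ring
  rw [hcard]
  exact abs_three_mul_ncard_cubicRoots_eq_empty_sub_le p hd

end CubicOverLinear

section Conjugates

open Module

variable {F K : Type*} [Field F] [Finite F] [Field K] [Algebra F K] [Module.Finite F K]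

lemma ncard_setOf_minpoly_eq_s17 {f : F[X]} (hmonic : f.Monic) (hirr : Irreducible f)
    (hdvd : f.natDegree ∣ finrank F K) : {α : K | minpoly F α = f}.ncard = f.natDegree := by
  have hmin {α : K} (hα : aeval α f = 0) : minpoly F α = f :=
    (minpoly.eq_of_irreducible_of_monic hirr hα hmonic).symm
  have hroots : {α : K | minpoly F α = f} = f.rootSet K := by
    ext α
    rw [mem_rootSet_of_ne hirr.ne_zero]
    exact ⟨fun h ↦ h ▸ minpoly.aeval F α, hmin⟩
  obtain ⟨α, hα⟩ := exists_root_of_natDegree_dvd_finrank hirr hdvd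
  have : Finite K := Module.finite_of_finite F
  have hsplits : (f.map (algebraMap F K)).Splits := hmin hα ▸ Normal.splits inferInstance α
  rw [hroots, ← Nat.card_coe_set_eq, Nat.card_eq_fintype_card,
    card_rootSet_eq_natDegree (PerfectField.separable_of_irreducible hirr) hsplits]

lemma finrank_mul_ncard_eq_ncard_minpoly_mem {S : Set F[X]}
    (hS : ∀ f ∈ S, f.Monic ∧ Irreducible f ∧ f.natDegree = finrank F K) :
    finrank F K * S.ncard = {α : K | minpoly F α ∈ S}.ncard := by
  classical
  have : Finite K := Module.finite_of_finite F
  have hfiber {f : F[X]} (hf : f ∈ S) : {α : K | minpoly F α = f}.ncard = finrank F K := by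
    obtain ⟨hmonic, hirr, hdeg⟩ := hS f hf
    rw [ncard_setOf_minpoly_eq_s17 hmonic hirr hdeg.dvd, hdeg]
  have hfin : S.Finite := by
    refine (Set.toFinite (Set.range (minpoly F : K → F[X]))).subset fun f hf ↦ ?_
    exact Set.nonempty_of_ncard_ne_zero ((hfiber hf).trans_ne finrank_pos.ne')
  have hmaps : Set.MapsTo (minpoly F) {α : K | minpoly F α ∈ S} hfin.toFinset := by
    simp [Set.MapsTo]
  rw [← sum_ncard_fiber _ hmaps, mul_comm, Set.ncard_eq_toFinset_card S hfin]
  refine (Finset.sum_const_nat fun f hf ↦ ?_).symm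
  rw [hfin.mem_toFinset] at hf
  rw [← hfiber hf]
  congr 1
  ext α
  exact and_iff_right_of_imp fun h ↦ by rwa [Set.mem_ofPred_eq, h]

lemma ncard_setOf_pow_pow_eq_le {K : Type*} [Field K] {q d : ℕ} (hq : 1 < q) (hd : d ≠ 0) :
    {α : K | α ^ q ^ d = α}.ncard ≤ q ^ d := by
  classical
  have hne : (X ^ q ^ d - X : K[X]) ≠ 0 := FiniteField.X_pow_card_pow_sub_X_ne_zero K hd hq
  calc {α : K | α ^ q ^ d = α}.ncard = ((X ^ q ^ d - X : K[X]).roots.toFinset : Set K).ncard := by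
        congr 1
        ext α
        simp [hne, sub_eq_zero]
    _ ≤ q ^ d := by
        rw [Set.ncard_coe_finset]
        refine ((Multiset.toFinset_card_le _).trans (card_roots' _)).trans_eq ?_
        exact FiniteField.X_pow_card_pow_sub_X_natDegree_eq K hd hq

lemma pow_card_pow_natDegree_minpoly (α : K) : α ^ Nat.card F ^ (minpoly F α).natDegree = α := by
  obtain ⟨f, hf⟩ := ((minpoly.irreducible (Algebra.IsIntegral.isIntegral (R := F) α))
    |>.natDegree_dvd_iff_dvd_X_pow_card_pow_sub_X).1 dvd_rfl
  simpa [sub_eq_zero] using congrArg (aeval α) hf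

variable (F K) in
lemma ncard_setOf_natDegree_minpoly_ne_le :
    {α : K | (minpoly F α).natDegree ≠ finrank F K}.ncard ≤
      2 * Nat.card F ^ (finrank F K / 2) := by
  have : Finite K := Module.finite_of_finite F
  have hq : 1 < Nat.card F := Finite.one_lt_card
  set q := Nat.card F
  set m := finrank F K / 2 with hm
  have hcover : {α : K | (minpoly F α).natDegree ≠ finrank F K} ⊆
      ⋃ d ∈ Finset.Icc 1 m, {α | α ^ q ^ d = α} := by
    intro α hα
    have hint : IsIntegral F α := Algebra.IsIntegral.isIntegral α
    have hpos := minpoly.natDegree_pos hint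
    obtain ⟨k, hk⟩ := minpoly.degree_dvd hint
    have hk2 : 2 ≤ k := by
      by_contra hk2
      interval_cases k
      · exact finrank_pos.ne' hk
      · exact hα (by omega)
    refine Set.mem_biUnion (Finset.mem_Icc.2 ⟨hpos, ?_⟩) (pow_card_pow_natDegree_minpoly α)
    rw [hm, Nat.le_div_iff_mul_le two_pos, hk]
    gcongr
  calc {α : K | (minpoly F α).natDegree ≠ finrank F K}.ncard
      ≤ ∑ d ∈ Finset.Icc 1 m, {α : K | α ^ q ^ d = α}.ncard :=
        (Set.ncard_le_ncard hcover).trans (Finset.set_ncard_biUnion_le _ _)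
    _ ≤ ∑ d ∈ Finset.Icc 1 m, q ^ d := Finset.sum_le_sum fun d hd ↦
        ncard_setOf_pow_pow_eq_le hq (Nat.one_le_iff_ne_zero.1 (Finset.mem_Icc.1 hd).1)
    _ ≤ ∑ d ∈ Finset.range (m + 1), q ^ d := Finset.sum_le_sum_of_subset fun d hd ↦ by
        simp only [Finset.mem_Icc, Finset.mem_range] at hd ⊢
        omega
    _ ≤ 2 * q ^ m := by
        have := Nat.geomSum_lt hq fun k ↦ (Finset.mem_range (n := m)).1
        rw [Finset.sum_range_succ]
        omega

end Conjugates

section Main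

open Module

variable {F : Type*} [Field F] [Finite F] {g h : F[X]}

lemma finrank_mul_ncard_irredSet {K : Type*} [Field K] [Algebra F K] [Module.Finite F K]
    (hgh : h.natDegree < g.natDegree) (hcop : IsCoprime g h) :
    finrank F K * (IrredSet g h (finrank F K)).ncard =
      {α : K | (minpoly F α).natDegree = finrank F K ∧
        Irreducible (g.map (algebraMap F K) - C α * h.map (algebraMap F K))}.ncard := by
  rw [finrank_mul_ncard_eq_ncard_minpoly_mem fun f hf ↦ ⟨hf.1, hf.2.1, hf.2.2.1⟩]
  congr 1
  ext α
  have hint : IsIntegral F α := Algebra.IsIntegral.isIntegral α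
  simp only [IrredSet, Set.mem_ofPred_eq, minpoly.monic hint, minpoly.irreducible hint, true_and]
  refine and_congr_right fun hα ↦ irreducible_ratTransform_minpoly_iff hgh hcop ?_
  rwa [Field.primitive_element_iff_minpoly_natDegree_eq]

lemma abs_three_mul_finrank_mul_ncard_irredSet_sub_le {K : Type*} [Field K] [Algebra F K]
    [Module.Finite F K] (p : ℕ) [Fact p.Prime] [CharP F p]
    (hg : g.natDegree = 3) (hh : h.natDegree = 1) (hcop : IsCoprime g h) :
    |3 * (finrank F K * (IrredSet g h (finrank F K)).ncard : ℝ) - Nat.card K| ≤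
      (12 * p + 8) * √(Nat.card K) := by
  have : Finite K := Module.finite_of_finite F
  have := Fintype.ofFinite K
  have : CharP K p := charP_of_injective_algebraMap (algebraMap F K).injective p
  set I := {α : K | Irreducible (g.map (algebraMap F K) - C α * h.map (algebraMap F K))}
  set D := {α : K | (minpoly F α).natDegree = finrank F K}
  have hinter : finrank F K * (IrredSet g h (finrank F K)).ncard = (D ∩ I).ncard :=
    finrank_mul_ncard_irredSet (by omega) hcop
  have hle : (D ∩ I).ncard ≤ I.ncard := Set.ncard_le_ncard Set.inter_subset_right
  have hge : I.ncard ≤ (D ∩ I).ncard + Dᶜ.ncard := by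
    rw [Set.inter_comm, ← Set.ncard_inter_add_ncard_sdiff_eq_ncard I D]
    exact Nat.add_le_add_left (Set.ncard_le_ncard fun _ h ↦ h.2) _
  have hcompl : Dᶜ.ncard ≤ 2 * √(Nat.card K) := by
    have hpow : (Nat.card F ^ (finrank F K / 2) : ℝ) ≤ √(Nat.card K) := by
      refine Real.le_sqrt_of_sq_le ?_
      rw [Module.natCard_eq_pow_finrank (K := F) (V := K), ← pow_mul, Nat.cast_pow]
      exact pow_le_pow_right₀ (by exact_mod_cast Nat.card_pos) (by omega)
    have hncard : (Dᶜ.ncard : ℝ) ≤ 2 * Nat.card F ^ (finrank F K / 2) :=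
      mod_cast ncard_setOf_natDegree_minpoly_ne_le F K
    linarith
  have hpencil : |3 * (I.ncard : ℝ) - Nat.card K| ≤ 12 * p * √(Nat.card K) + 2 := by
    rw [Nat.card_eq_fintype_card]
    exact abs_three_mul_ncard_irreducible_sub_le p (by rwa [natDegree_map])
      (by rwa [natDegree_map]) (hcop.map (mapRingHom (algebraMap F K)))
  have hsqrt : 1 ≤ √(Nat.card K) := Real.one_le_sqrt.2 (by exact_mod_cast Nat.card_pos)
  rify at hinter hle hge
  rw [hinter]
  rw [abs_le] at hpencil ⊢
  constructor <;> linarith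

theorem stmt17_general (p : ℕ) [Fact p.Prime] [CharP F p]
    (hg : g.natDegree = 3) (hh : h.natDegree = 1) (hcop : IsCoprime g h) {n : ℕ} (hn : n ≠ 0) :
    |((IrredSet g h n).ncard : ℝ) - (Nat.card F : ℝ) ^ n / (3 * n)| ≤
      (4 * p + 3) * (Nat.card F : ℝ) ^ ((n : ℝ) / 2) / n := by
  have : NeZero n := ⟨hn⟩
  let K := FiniteField.Extension F p n
  have hsqrt : √((Nat.card F : ℝ) ^ n) = (Nat.card F : ℝ) ^ ((n : ℝ) / 2) := by
    rw [Real.sqrt_eq_rpow, ← Real.rpow_natCast_mul (Nat.cast_nonneg _), mul_one_div]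
  have hbound := abs_three_mul_finrank_mul_ncard_irredSet_sub_le (K := K) p hg hh hcop
  rw [FiniteField.finrank_extension F p n, FiniteField.natCard_extension F p n, Nat.cast_pow,
    hsqrt] at hbound
  have hpos : 0 < 3 * (n : ℝ) := by positivity
  have hscale : ((IrredSet g h n).ncard : ℝ) - (Nat.card F : ℝ) ^ n / (3 * n) =
      (3 * (n * (IrredSet g h n).ncard : ℝ) - (Nat.card F : ℝ) ^ n) / (3 * n) := by
    field_simp
  have hrpow : 0 ≤ (Nat.card F : ℝ) ^ ((n : ℝ) / 2) := by positivity
  rw [hscale, abs_div, abs_of_pos hpos, ← div_div]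
  gcongr
  linarith

end Main

/-- Theorem 17: over `F_q` of characteristic two, for `R(x) = (x³+c)/x` with `c ≠ 0`, or
`R(x) = (x³+c)/(x+c)` with `c ∈ F_q \ F_2`, we have
`|𝓘(g,h,n,q)| = q^n/(3n) + O(q^{n/2}/n)`. -/
theorem stmt17 {F : Type*} [Field F] [Fintype F] [CharP F 2] (q : ℕ)
    (hq : Fintype.card F = q) (g h : F[X])
    (hcase : (∃ c : F, c ≠ 0 ∧ g = X ^ 3 + C c ∧ h = X) ∨
             (∃ c : F, c ≠ 0 ∧ c ≠ 1 ∧ g = X ^ 3 + C c ∧ h = X + C c)) :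
    ∃ Cst : ℝ, ∀ n : ℕ, 1 < n →
      |((IrredSet g h n).ncard : ℝ) - (q : ℝ) ^ n / (3 * n)| ≤
        Cst * (q : ℝ) ^ ((n : ℝ) / 2) / n := by
  obtain ⟨a, c, hac, rfl, rfl⟩ :
      ∃ a c : F, a ^ 3 + c ≠ 0 ∧ g = X ^ 3 + C c ∧ h = X + C a := by
    obtain ⟨c, hc, rfl, rfl⟩ | ⟨c, hc, hc1, rfl, rfl⟩ := hcase
    · exact ⟨0, c, by simpa using hc, rfl, by simp⟩
    · have hfactor : c ^ 3 + c = c * (c - 1) ^ 2 := by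
        linear_combination c ^ 2 * CharTwo.two_eq_zero (R := F)
      exact ⟨c, c, hfactor ▸ mul_ne_zero hc (pow_ne_zero 2 (sub_ne_zero.2 hc1)), rfl, rfl⟩
  have hcop : IsCoprime (X ^ 3 + C c) (X + C a) := by
    rw [← CharTwo.sub_eq_add X, isCoprime_comm, irreducible_X_sub_C a |>.coprime_iff_not_dvd,
      dvd_iff_isRoot]
    simpa using hac
  have : Fact (Nat.Prime 2) := ⟨Nat.prime_two⟩
  rw [Fintype.card_eq_nat_card] at hq
  subst hq
  exact ⟨_, fun n hn ↦ stmt17_general 2 natDegree_X_pow_add_C (natDegree_X_add_C a) hcop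
    (by omega)⟩
end
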